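/- arXiv:2509.00769 — 4 statements merged into one kernel-verified Lean document; each statement's English description precedes it below -/
import Mathlib

section
/- Let a and b be positive integers with b > a, and let G be a connected graph of order n ≥ 2(a+b+2)(b+2) with minimum degree δ(G) ≥ a. If ρ(G) ≥ ρ(H_n^{a,b}), then G contains a fractional [a,b]-factor, unless G is isomorphic to H_n^{a,b}. -/
set_option linter.unusedSectionVars false

open Finset Matrix

namespace SimpleGraph

variable {V : Type*} [Fintype V] [DecidableEq V]

lemma isHermitian_adjMatrix' (G : SimpleGraph V) [DecidableRel G.Adj] :
    (G.adjMatrix ℝ).IsHermitian := by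
  rw [Matrix.IsHermitian, conjTranspose_eq_transpose_of_trivial, isSymm_adjMatrix]

/-- The spectral radius (largest adjacency eigenvalue) of a finite simple graph. -/
noncomputable def spectralRadius (G : SimpleGraph V) : ℝ :=
  letI := Classical.decRel G.Adj
  ⨆ i, (isHermitian_adjMatrix' G).eigenvalues i

/-- `G` has an `[a,b]`-factor: a spanning subgraph all of whose degrees lie in `[a,b]`. -/
def HasABFactor (G : SimpleGraph V) (a b : ℕ) : Prop :=
  ∃ H : SimpleGraph V, H ≤ G ∧ ∀ v : V,
    letI := Classical.decRel H.Adj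
    a ≤ H.degree v ∧ H.degree v ≤ b

/-- `G` has a fractional `[a,b]`-factor: a weighting of the edges by values in `[0,1]`
such that the total weight at every vertex lies in `[a,b]`. -/
def HasFractionalABFactor (G : SimpleGraph V) (a b : ℕ) : Prop :=
  letI := Classical.decRel G.Adj
  ∃ h : Sym2 V → ℝ, (∀ e ∈ G.edgeSet, 0 ≤ h e ∧ h e ≤ 1) ∧
    ∀ v : V, (a : ℝ) ≤ ∑ e ∈ G.incidenceFinset v, h e ∧
      ∑ e ∈ G.incidenceFinset v, h e ≤ (b : ℝ)

end SimpleGraph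

/-- `K_a ∨ (K_{n-a-b-1} ∪ (b+1)K_1)`, with vertices `0,…,a-1` forming the `K_a`,
vertices `a,…,n-b-2` forming the `K_{n-a-b-1}`, and the last `b+1` vertices independent. -/
def baseGraph (n a b : ℕ) : SimpleGraph (Fin n) :=
  SimpleGraph.fromRel (fun i j => (i : ℕ) < a ∨ ((i : ℕ) < n - b - 1 ∧ (j : ℕ) < n - b - 1))

/-- The graph `H_n^{a,b}`: `baseGraph n a b` together with `a-1` extra edges joining the
vertex `n-b-1` (a fixed vertex of the independent part `(b+1)K_1`) to the `a-1`
vertices `a,…,2a-2` of the `K_{n-a-b-1}` part. -/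
def Hgraph (n a b : ℕ) : SimpleGraph (Fin n) :=
  SimpleGraph.fromRel (fun i j => (i : ℕ) < a ∨ ((i : ℕ) < n - b - 1 ∧ (j : ℕ) < n - b - 1) ∨
    ((i : ℕ) = n - b - 1 ∧ a ≤ (j : ℕ) ∧ (j : ℕ) < 2 * a - 1))

/-- The family `𝒢_n^{a,b}`: graphs obtained from `baseGraph n a b` by adding `a-1` edges
between the clique part `{a,…,n-b-2}` and the independent part `{n-b-1,…,n-1}`. -/
def GFamily (n a b : ℕ) (G : SimpleGraph (Fin n)) : Prop :=
  ∃ F : Finset (Fin n × Fin n), F.card = a - 1 ∧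
    (∀ p ∈ F, a ≤ (p.1 : ℕ) ∧ (p.1 : ℕ) < n - b - 1 ∧ n - b - 1 ≤ (p.2 : ℕ)) ∧
    G = baseGraph n a b ⊔ SimpleGraph.fromEdgeSet ((fun p : Fin n × Fin n => s(p.1, p.2)) '' F)

open Classical in
noncomputable def aw {V : Type*} (G : SimpleGraph V) (u v : V) : ℝ := if G.Adj u v then 1 else 0

lemma aw_symm {V : Type*} (G : SimpleGraph V) (u v : V) : aw G u v = aw G v u := by
  unfold aw; rw [G.adj_comm]

lemma aw_nonneg {V : Type*} (G : SimpleGraph V) (u v : V) : 0 ≤ aw G u v := by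
  unfold aw; split_ifs <;> norm_num

lemma aw_le_one {V : Type*} (G : SimpleGraph V) (u v : V) : aw G u v ≤ 1 := by
  unfold aw; split_ifs <;> norm_num

lemma aw_adj {V : Type*} {G : SimpleGraph V} {u v : V} (h : G.Adj u v) : aw G u v = 1 := by
  unfold aw; simp [h]

lemma aw_nadj {V : Type*} {G : SimpleGraph V} {u v : V} (h : ¬ G.Adj u v) : aw G u v = 0 := by
  unfold aw; simp [h]

lemma psd_sr {V : Type*} [Fintype V] [DecidableEq V] (G : SimpleGraph V) :
    letI := Classical.decRel G.Adj
    (G.spectralRadius • (1 : Matrix V V ℝ) - G.adjMatrix ℝ).PosSemidef := by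
  let inst := Classical.decRel G.Adj
  have hA := SimpleGraph.isHermitian_adjMatrix' G
  have hle : ∀ i, hA.eigenvalues i ≤ G.spectralRadius := fun i =>
    le_ciSup (f := fun i => hA.eigenvalues i) (Set.finite_range _).bddAbove i
  have hs := hA.spectral_theorem
  set U := hA.eigenvectorUnitary
  have h1 : (G.spectralRadius • (1 : Matrix V V ℝ) - G.adjMatrix ℝ)
      = (U : Matrix V V ℝ) * Matrix.diagonal (fun i => G.spectralRadius - hA.eigenvalues i)
        * (U : Matrix V V ℝ)ᴴ := by
    have h2 : (Matrix.diagonal (fun i => G.spectralRadius - hA.eigenvalues i) : Matrix V V ℝ)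
        = G.spectralRadius • (1 : Matrix V V ℝ) - Matrix.diagonal hA.eigenvalues := by
      ext i j
      by_cases h : i = j
      · subst h; simp
      · simp [h]
    have h3 : (U : Matrix V V ℝ) * (U : Matrix V V ℝ)ᴴ = 1 := by
      have := Unitary.coe_mul_star_self U
      simpa [Matrix.star_eq_conjTranspose] using this
    rw [h2, Matrix.mul_sub, Matrix.sub_mul]
    congr 1
    · rw [Matrix.mul_smul, Matrix.mul_one, Matrix.smul_mul, h3]
  rw [h1]
  exact (Matrix.PosSemidef.diagonal (fun i => sub_nonneg.2 (hle i))).mul_mul_conjTranspose_same _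

lemma adjMatrix_mulVec_aw {V : Type*} [Fintype V] [DecidableEq V] (G : SimpleGraph V)
    (x : V → ℝ) (v : V) :
    letI := Classical.decRel G.Adj
    (G.adjMatrix ℝ *ᵥ x) v = ∑ u, aw G v u * x u := by
  simp only [Matrix.mulVec, dotProduct, SimpleGraph.adjMatrix_apply, aw]

lemma quad_eq {V : Type*} [Fintype V] [DecidableEq V] (G : SimpleGraph V) (z : V → ℝ) :
    letI := Classical.decRel G.Adj
    z ⬝ᵥ ((G.spectralRadius • (1 : Matrix V V ℝ) - G.adjMatrix ℝ) *ᵥ z)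
      = G.spectralRadius * ∑ v, z v ^ 2 - ∑ v, ∑ u, aw G v u * (z v * z u) := by
  rw [Matrix.sub_mulVec, dotProduct_sub]
  congr 1
  · simp [dotProduct, Matrix.smul_mulVec, Finset.mul_sum]
    apply Finset.sum_congr rfl; intros; ring
  · simp only [dotProduct, adjMatrix_mulVec_aw, Finset.mul_sum]
    apply Finset.sum_congr rfl; intros
    apply Finset.sum_congr rfl; intros
    ring

lemma rayleigh_le {V : Type*} [Fintype V] [DecidableEq V] (G : SimpleGraph V) (z : V → ℝ) :
    ∑ v, ∑ u, aw G v u * (z v * z u) ≤ G.spectralRadius * ∑ v, z v ^ 2 := by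
  have h := (psd_sr G).dotProduct_mulVec_nonneg z
  rw [star_trivial, quad_eq] at h
  linarith

lemma eigen_of_eq {V : Type*} [Fintype V] [DecidableEq V] (G : SimpleGraph V) (z : V → ℝ)
    (h : G.spectralRadius * ∑ v, z v ^ 2 ≤ ∑ v, ∑ u, aw G v u * (z v * z u)) (v : V) :
    ∑ u, aw G v u * z u = G.spectralRadius * z v := by
  have h0 := ((psd_sr G).dotProduct_mulVec_zero_iff z).1 (by
    rw [star_trivial, quad_eq]; linarith [rayleigh_le G z])
  have h1 := congrFun h0 v
  rw [Matrix.sub_mulVec, Pi.sub_apply, adjMatrix_mulVec_aw] at h1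
  simp [Matrix.smul_mulVec] at h1
  linarith

lemma exists_perron {V : Type*} [Fintype V] [DecidableEq V] [Nonempty V] (G : SimpleGraph V) :
    ∃ x : V → ℝ, (∀ v, 0 ≤ x v) ∧ (∃ v, 0 < x v) ∧
      ∀ v, ∑ u, aw G v u * x u = G.spectralRadius * x v := by
  let inst := Classical.decRel G.Adj
  have hA := SimpleGraph.isHermitian_adjMatrix' G
  obtain ⟨i, hi⟩ := exists_eq_ciSup_of_finite (f := fun i => hA.eigenvalues i)
  have hi' : hA.eigenvalues i = G.spectralRadius := hi
  set z : V → ℝ := fun v => hA.eigenvectorBasis i v with hz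
  have hz0 : ∃ v, z v ≠ 0 := by
    by_contra! hc
    have : hA.eigenvectorBasis i = 0 := by ext v; exact hc v
    exact hA.eigenvectorBasis.orthonormal.ne_zero i this
  have he : ∀ v, ∑ u, aw G v u * z u = G.spectralRadius * z v := by
    intro v
    have := congrFun (hA.mulVec_eigenvectorBasis i) v
    have h2 := adjMatrix_mulVec_aw G z v
    rw [← h2, ← hi']
    exact this
  refine ⟨fun v => |z v|, fun v => abs_nonneg _, ?_, ?_⟩
  · obtain ⟨v, hv⟩ := hz0
    exact ⟨v, abs_pos.2 hv⟩
  · apply eigen_of_eq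
    simp only [sq_abs, Finset.mul_sum]
    apply Finset.sum_le_sum
    intro v _
    calc G.spectralRadius * z v ^ 2 = z v * ∑ u, aw G v u * z u := by rw [he]; ring
      _ = ∑ u, aw G v u * (z v * z u) := by
        rw [Finset.mul_sum]; apply Finset.sum_congr rfl; intros; ring
      _ ≤ _ := by
        apply Finset.sum_le_sum
        intro u _
        apply mul_le_mul_of_nonneg_left _ (aw_nonneg _ _ _)
        rw [← abs_mul]; exact le_abs_self _

lemma sum_aw {V : Type*} [Fintype V] [DecidableEq V] (G : SimpleGraph V) [DecidableRel G.Adj]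
    (v : V) : ∑ u, aw G v u = G.degree v := by
  have h : ∀ u, aw G v u = if G.Adj v u then 1 else 0 := by
    intro u; unfold aw; split_ifs <;> rfl
  simp only [h]
  rw [Finset.sum_boole]
  norm_cast
  rw [← SimpleGraph.card_neighborFinset_eq_degree]
  congr 1
  ext u; simp

lemma sr_sq_le {V : Type*} [Fintype V] [DecidableEq V] [Nonempty V] (G : SimpleGraph V) :
    G.spectralRadius ^ 2 ≤ ∑ v, ∑ u, aw G v u := by
  obtain ⟨x, hx, ⟨v0, hv0⟩, he⟩ := exists_perron G
  have hpos : 0 < ∑ v, x v ^ 2 :=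
    Finset.sum_pos' (fun v _ => sq_nonneg _) ⟨v0, Finset.mem_univ _, by positivity⟩
  have h1 : ∀ v, (G.spectralRadius * x v) ^ 2 ≤ (∑ u, aw G v u) * ∑ u, x u ^ 2 := by
    intro v
    rw [← he]
    refine (Finset.sum_mul_sq_le_sq_mul_sq _ _ _).trans ?_
    apply mul_le_mul_of_nonneg_right _ hpos.le
    apply Finset.sum_le_sum
    intro u _
    nlinarith [aw_nonneg G v u, aw_le_one G v u]
  have h2 := Finset.sum_le_sum (fun v (_ : v ∈ Finset.univ) => h1 v)
  rw [← Finset.sum_mul] at h2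
  simp only [mul_pow] at h2
  rw [← Finset.mul_sum] at h2
  exact le_of_mul_le_mul_right h2 hpos

lemma sr_le_of_iso {V : Type*} [Fintype V] [DecidableEq V] [Nonempty V] (G G' : SimpleGraph V)
    (e : G ≃g G') : G.spectralRadius ≤ G'.spectralRadius := by
  obtain ⟨x, hx, ⟨v0, hv0⟩, he⟩ := exists_perron G
  have hpos : 0 < ∑ v, x v ^ 2 :=
    Finset.sum_pos' (fun v _ => sq_nonneg _) ⟨v0, Finset.mem_univ _, by positivity⟩
  have h := rayleigh_le G' (fun v => x (e.symm v))
  have h1 : ∑ v, x (e.symm v) ^ 2 = ∑ v, x v ^ 2 :=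
    Equiv.sum_comp e.symm.toEquiv (fun v => x v ^ 2)
  have h2 : ∑ v, ∑ u, aw G' v u * (x (e.symm v) * x (e.symm u))
      = ∑ v, ∑ u, aw G v u * (x v * x u) := by
    have haw : ∀ v u, aw G' v u = aw G (e.symm v) (e.symm u) := by
      intro v u
      have := e.symm.map_adj_iff (v := v) (w := u)
      by_cases hh : G'.Adj v u
      · rw [aw_adj hh, aw_adj (this.2 hh)]
      · rw [aw_nadj hh, aw_nadj (fun h => hh (this.1 h))]
    simp only [haw]
    refine (Equiv.sum_comp e.symm.toEquiv
      (fun v => ∑ u, aw G v (e.symm u) * (x v * x (e.symm u)))).trans ?_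
    apply Finset.sum_congr rfl; intro v _
    exact Equiv.sum_comp e.symm.toEquiv (fun u => aw G v u * (x v * x u))
  have h3 : ∑ v, ∑ u, aw G v u * (x v * x u) = G.spectralRadius * ∑ v, x v ^ 2 := by
    rw [Finset.mul_sum]
    apply Finset.sum_congr rfl; intro v _
    calc ∑ u, aw G v u * (x v * x u) = x v * ∑ u, aw G v u * x u := by
          rw [Finset.mul_sum]; apply Finset.sum_congr rfl; intros; ring
      _ = _ := by rw [he]; ring
  rw [h1, h2, h3] at h
  exact le_of_mul_le_mul_right h hpos

lemma sr_mono {V : Type*} [Fintype V] [DecidableEq V] [Nonempty V] (G G' : SimpleGraph V)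
    (e : G ≤ G') : G.spectralRadius ≤ G'.spectralRadius := by
  obtain ⟨x, hx, ⟨v0, hv0⟩, he⟩ := exists_perron G
  have hpos : 0 < ∑ v, x v ^ 2 :=
    Finset.sum_pos' (fun v _ => sq_nonneg _) ⟨v0, Finset.mem_univ _, by positivity⟩
  have h := rayleigh_le G' x
  have h3 : ∑ v, ∑ u, aw G v u * (x v * x u) = G.spectralRadius * ∑ v, x v ^ 2 := by
    rw [Finset.mul_sum]
    apply Finset.sum_congr rfl; intro v _
    calc ∑ u, aw G v u * (x v * x u) = x v * ∑ u, aw G v u * x u := by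
          rw [Finset.mul_sum]; apply Finset.sum_congr rfl; intros; ring
      _ = _ := by rw [he]; ring
  have h4 : ∑ v, ∑ u, aw G v u * (x v * x u) ≤ ∑ v, ∑ u, aw G' v u * (x v * x u) := by
    apply Finset.sum_le_sum; intro v _
    apply Finset.sum_le_sum; intro u _
    apply mul_le_mul_of_nonneg_right _ (mul_nonneg (hx _) (hx _))
    by_cases hvu : G.Adj v u
    · rw [aw_adj hvu, aw_adj (e hvu)]
    · rw [aw_nadj hvu]; exact aw_nonneg _ _ _
  rw [h3] at h4
  exact le_of_mul_le_mul_right (h4.trans h) hpos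

/-- for connected `G ≤ G'` with the same spectral radius, equality. -/
lemma eq_of_sr_le {V : Type*} [Fintype V] [DecidableEq V] [Nonempty V] (G G' : SimpleGraph V)
    (e : G ≤ G') (hc : G.Connected) (hle : G'.spectralRadius ≤ G.spectralRadius) : G = G' := by
  obtain ⟨x, hx, ⟨v0, hv0⟩, he⟩ := exists_perron G
  -- positivity
  have hprop : ∀ u v, G.Adj u v → 0 < x u → 0 < x v := by
    intro u v huv hu
    by_contra hv
    have hv0 : x v = 0 := le_antisymm (not_lt.1 hv) (hx v)
    have h1 := he v
    rw [hv0, mul_zero] at h1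
    have h2 := (Finset.sum_eq_zero_iff_of_nonneg
      (fun w _ => mul_nonneg (aw_nonneg G v w) (hx w))).1 h1 u (Finset.mem_univ _)
    rw [aw_adj huv.symm] at h2
    linarith
  have hxpos : ∀ v, 0 < x v := by
    intro v
    obtain ⟨p⟩ := hc.preconnected v0 v
    induction p with
    | nil => exact hv0
    | cons h p ih => exact ih (hprop _ _ h hv0)
  have h := rayleigh_le G' x
  have h3 : ∑ v, ∑ u, aw G v u * (x v * x u) = G.spectralRadius * ∑ v, x v ^ 2 := by
    rw [Finset.mul_sum]
    apply Finset.sum_congr rfl; intro v _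
    calc ∑ u, aw G v u * (x v * x u) = x v * ∑ u, aw G v u * x u := by
          rw [Finset.mul_sum]; apply Finset.sum_congr rfl; intros; ring
      _ = _ := by rw [he]; ring
  have hpos : 0 ≤ ∑ v, x v ^ 2 := Finset.sum_nonneg (fun v _ => sq_nonneg _)
  by_contra hne
  have hlt : G < G' := lt_of_le_of_ne e hne
  have hex : ∃ p q, G'.Adj p q ∧ ¬ G.Adj p q := by
    by_contra! hcon
    exact hne (le_antisymm e (fun p q => hcon p q))
  obtain ⟨p, q, hpq, hnpq⟩ := hex
  have hterm : ∀ v u, aw G v u * (x v * x u) ≤ aw G' v u * (x v * x u) := by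
    intro v u
    apply mul_le_mul_of_nonneg_right _ (mul_nonneg (hx _) (hx _))
    by_cases hvu : G.Adj v u
    · rw [aw_adj hvu, aw_adj (e hvu)]
    · rw [aw_nadj hvu]; exact aw_nonneg _ _ _
  have h4 : ∑ v, ∑ u, aw G v u * (x v * x u) < ∑ v, ∑ u, aw G' v u * (x v * x u) := by
    apply Finset.sum_lt_sum
    · intro v _
      exact Finset.sum_le_sum (fun u _ => hterm v u)
    · refine ⟨p, Finset.mem_univ _, ?_⟩
      apply Finset.sum_lt_sum (fun u _ => hterm p u)
      refine ⟨q, Finset.mem_univ _, ?_⟩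
      rw [aw_adj hpq, aw_nadj hnpq]
      have := mul_pos (hxpos p) (hxpos q)
      linarith
  have := mul_le_mul_of_nonneg_right hle hpos
  linarith



lemma pos_part_split (p q : ℝ) : max (p - max 0 (-q)) 0 + max (q - max 0 (-p)) 0 = max (p + q) 0 := by
  rcases le_total 0 p with hp | hp <;> rcases le_total 0 q with hq | hq
  · rw [max_eq_left (by linarith : -q ≤ 0), max_eq_left (by linarith : -p ≤ 0),
      max_eq_left (by linarith), max_eq_left (by linarith), max_eq_left (by linarith)]; ring
  · rw [max_eq_right (by linarith : 0 ≤ -q), max_eq_left (by linarith : -p ≤ 0),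
      max_eq_right (by linarith : q - 0 ≤ 0)]; ring_nf
  · rw [max_eq_right (by linarith : 0 ≤ -p), max_eq_left (by linarith : -q ≤ 0),
      max_eq_right (by linarith : p - 0 ≤ 0)]; ring_nf
  · rw [max_eq_right (by linarith : 0 ≤ -p), max_eq_right (by linarith : 0 ≤ -q),
      max_eq_right (by linarith : p - -q ≤ 0), max_eq_right (by linarith : q - -p ≤ 0),
      max_eq_right (by linarith)]; ring

lemma int_ind (p q : ℝ) : ∫ t, (Set.Ico p q).indicator (fun _ => (1:ℝ)) t = max (q - p) 0 := by
  rw [MeasureTheory.integral_indicator_const _ measurableSet_Ico]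
  simp [Real.volume_real_Ico]

lemma integrable_ind (p q : ℝ) : MeasureTheory.Integrable ((Set.Ico p q).indicator (fun _ => (1:ℝ))) := by
  rw [MeasureTheory.integrable_indicator_iff measurableSet_Ico]
  simp

lemma sep_fn {V : Type*} [Fintype V] [DecidableEq V] (G : SimpleGraph V) (a b : ℕ) (hab : a ≤ b)
    (hno : ¬ G.HasFractionalABFactor a b) :
    ∃ c : V → ℝ, ∑ v, ∑ u, aw G v u * max (c v - max 0 (-c u)) 0 <
      ∑ v, ((a : ℝ) * max (c v) 0 - b * max (-c v) 0) := by
  let inst := Classical.decRel G.Adj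
  let L : (Sym2 V → ℝ) →ₗ[ℝ] (V → ℝ) :=
    { toFun := fun h v => ∑ e ∈ G.incidenceFinset v, h e
      map_add' := by intro x y; ext v; simp [Finset.sum_add_distrib]
      map_smul' := by intro r x; ext v; simp [Finset.mul_sum] }
  have hLc : Continuous L := L.continuous_of_finiteDimensional
  have hLapp : ∀ (h : Sym2 V → ℝ) v, L h v = ∑ u, aw G v u * h s(v, u) := by
    intro h v
    change ∑ e ∈ G.incidenceFinset v, h e = _
    have h1 : ∑ u, aw G v u * h s(v, u) = ∑ u ∈ G.neighborFinset v, h s(v, u) := by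
      rw [← Finset.sum_filter_add_sum_filter_not Finset.univ (fun u => G.Adj v u)]
      rw [show ∑ u with ¬ G.Adj v u, aw G v u * h s(v, u) = 0 from
        Finset.sum_eq_zero (fun u hu => by rw [aw_nadj (Finset.mem_filter.1 hu).2, zero_mul]),
        add_zero]
      apply Finset.sum_congr
      · ext u; simp
      · intro u hu; rw [aw_adj (by simpa using hu), one_mul]
    rw [h1]
    symm
    apply Finset.sum_bij (fun u _ => s(v, u))
    · intro u hu
      simpa [SimpleGraph.mem_incidenceFinset, SimpleGraph.mk'_mem_incidenceSet_iff] using hu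
    · intro u _ w _ huw
      exact Sym2.congr_right.1 huw
    · intro e he
      rw [SimpleGraph.mem_incidenceFinset] at he
      obtain ⟨he1, he2⟩ := he
      obtain ⟨u, rfl⟩ := Sym2.mem_iff_exists.1 he2
      exact ⟨u, by simpa using he1, rfl⟩
    · intros; rfl
  let K : Set (V → ℝ) := L '' (Set.Icc 0 1)
  let B : Set (V → ℝ) := Set.Icc (fun _ => (a:ℝ)) (fun _ => (b:ℝ))
  have hKc : IsCompact K := isCompact_Icc.image hLc
  have hKv : Convex ℝ K := (convex_Icc 0 1).linear_image L
  have hBv : Convex ℝ B := convex_Icc _ _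
  have hBc : IsClosed B := isClosed_Icc
  have hdisj : Disjoint K B := by
    rw [Set.disjoint_left]
    rintro _ ⟨h, hh, rfl⟩ hB
    apply hno
    refine ⟨h, fun e _ => ⟨hh.1 e, hh.2 e⟩, fun v => ⟨hB.1 v, hB.2 v⟩⟩
  obtain ⟨f, u, w, hfu, huw, hwf⟩ := geometric_hahn_banach_compact_closed hKv hKc hBv hBc hdisj
  let c : V → ℝ := fun v => f (Pi.single v 1)
  have hf : ∀ z : V → ℝ, f z = ∑ v, c v * z v := by
    intro z
    conv_lhs => rw [← Finset.univ_sum_single z]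
    rw [map_sum]
    apply Finset.sum_congr rfl
    intro v _
    have : (Pi.single v (z v) : V → ℝ) = z v • Pi.single v 1 := by
      rw [← Pi.single_smul]; simp
    rw [this, map_smul]; simp [c, mul_comm]
  refine ⟨c, ?_⟩
  -- test point in B
  have hb := hwf (fun v => if 0 ≤ c v then (a:ℝ) else b) (by
    have : (a:ℝ) ≤ b := by exact_mod_cast hab
    constructor <;> intro v <;> dsimp only <;> split_ifs <;> simp [this])
  -- test point in K
  let h : Sym2 V → ℝ := Sym2.lift ⟨fun p q => if 0 < c p + c q then 1 else 0, by
    intro p q; simp only [add_comm]⟩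
  have hk := hfu (L h) ⟨h, by
    constructor <;> intro e <;> induction e with | _ p q => ?_
    all_goals simp only [h, Sym2.lift_mk]; split_ifs <;> simp, rfl⟩
  rw [hf] at hb hk
  simp only [hLapp] at hk
  have e1 : ∑ v, c v * (if 0 ≤ c v then (a:ℝ) else b)
      = ∑ v, ((a : ℝ) * max (c v) 0 - b * max (-c v) 0) := by
    apply Finset.sum_congr rfl
    intro v _
    split_ifs with hc
    · rw [max_eq_left hc, max_eq_right (by linarith)]; ring
    · rw [max_eq_right (by linarith), max_eq_left (by linarith)]; ring
  have e2 : ∑ v, c v * ∑ u, aw G v u * h s(v, u)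
      = ∑ v, ∑ u, aw G v u * max (c v - max 0 (-c u)) 0 := by
    have s1 : ∑ v, c v * ∑ u, aw G v u * h s(v, u) = ∑ v, ∑ u, aw G v u * h s(v,u) * c v := by
      apply Finset.sum_congr rfl; intro v _
      rw [Finset.mul_sum]; apply Finset.sum_congr rfl; intros; ring
    have s2 : ∑ v, ∑ u, aw G v u * h s(v,u) * c v = ∑ v, ∑ u, aw G v u * h s(v,u) * c u := by
      rw [Finset.sum_comm]
      apply Finset.sum_congr rfl; intro v _
      apply Finset.sum_congr rfl; intro u _
      rw [aw_symm, Sym2.eq_swap]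
    have s3 : ∑ v, ∑ u, aw G v u * max (c v - max 0 (-c u)) 0
        = ∑ v, ∑ u, aw G v u * max (c u - max 0 (-c v)) 0 := by
      rw [Finset.sum_comm]
      apply Finset.sum_congr rfl; intro v _
      apply Finset.sum_congr rfl; intro u _
      rw [aw_symm]
    have s4 : ∑ v, ∑ u, aw G v u * h s(v,u) * c v + ∑ v, ∑ u, aw G v u * h s(v,u) * c u
        = ∑ v, ∑ u, aw G v u * max (c v - max 0 (-c u)) 0
         + ∑ v, ∑ u, aw G v u * max (c u - max 0 (-c v)) 0 := by
      rw [← Finset.sum_add_distrib, ← Finset.sum_add_distrib]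
      apply Finset.sum_congr rfl; intro v _
      rw [← Finset.sum_add_distrib, ← Finset.sum_add_distrib]
      apply Finset.sum_congr rfl; intro u _
      rw [← mul_add, ← mul_add, pos_part_split, mul_assoc]
      congr 1
      simp only [h, Sym2.lift_mk]
      split_ifs with hc
      · rw [max_eq_left hc.le]; ring
      · rw [max_eq_right (by linarith)]; ring
    linarith
  rw [e1] at hb
  rw [e2] at hk
  linarith

lemma criterion {V : Type*} [Fintype V] [DecidableEq V] (G : SimpleGraph V) (a b : ℕ) (hab : a ≤ b)
    (hno : ¬ G.HasFractionalABFactor a b) :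
    ∃ S T : Finset V, Disjoint S T ∧
      ∑ v ∈ T, ∑ u ∈ Sᶜ, aw G v u + b * (#S : ℝ) < a * (#T : ℝ) := by
  obtain ⟨c, hc⟩ := sep_fn G a b hab hno
  let I : ℝ → ℝ → ℝ → ℝ := fun p q => (Set.Ico p q).indicator (fun _ => (1:ℝ))
  let g : ℝ → ℝ := fun t => ∑ v, ((a : ℝ) * I 0 (c v) t - b * I 0 (-c v) t)
    - ∑ v, ∑ u, aw G v u * I (max 0 (-c u)) (c v) t
  have hI : ∀ p q, MeasureTheory.Integrable (I p q) := integrable_ind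
  have hint : ∫ t, g t = ∑ v, ((a : ℝ) * max (c v) 0 - b * max (-c v) 0)
     - ∑ v, ∑ u, aw G v u * max (c v - max 0 (-c u)) 0 := by
    have i1 : ∀ v, MeasureTheory.Integrable
      (fun t => ((a : ℝ) * I 0 (c v) t - b * I 0 (-c v) t)) := fun v =>
      ((hI _ _).const_mul _).sub ((hI _ _).const_mul _)
    have i2 : ∀ v, MeasureTheory.Integrable
      (fun t => ∑ u, aw G v u * I (max 0 (-c u)) (c v) t) := fun v =>
      MeasureTheory.integrable_finsetSum _ (fun u _ => (hI _ _).const_mul _)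
    rw [MeasureTheory.integral_sub (MeasureTheory.integrable_finsetSum _ (fun v _ => i1 v))
      (MeasureTheory.integrable_finsetSum _ (fun v _ => i2 v))]
    rw [MeasureTheory.integral_finsetSum _ (fun v _ => i1 v),
      MeasureTheory.integral_finsetSum _ (fun v _ => i2 v)]
    congr 1
    · apply Finset.sum_congr rfl; intro v _
      rw [MeasureTheory.integral_sub ((hI _ _).const_mul _) ((hI _ _).const_mul _),
        MeasureTheory.integral_const_mul, MeasureTheory.integral_const_mul]
      simp only [I, int_ind, sub_zero]
    · apply Finset.sum_congr rfl; intro v _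
      rw [MeasureTheory.integral_finsetSum _ (fun u _ => (hI _ _).const_mul _)]
      apply Finset.sum_congr rfl; intro u _
      rw [MeasureTheory.integral_const_mul]
      simp only [I, int_ind]
  have hex : ∃ t, 0 < g t := by
    by_contra! hcon
    have := MeasureTheory.integral_nonpos (μ := MeasureTheory.volume) (f := g) hcon
    linarith
  obtain ⟨t, ht⟩ := hex
  have ht0 : 0 ≤ t := by
    by_contra hneg
    push Not at hneg
    have z : ∀ p q, 0 ≤ p → I p q t = 0 := by
      intro p q hp
      apply Set.indicator_of_notMem
      intro h; linarith [h.1]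
    have : g t = 0 := by
      simp only [g]
      simp [z]
    linarith
  classical
  refine ⟨univ.filter (fun v => c v < -t), univ.filter (fun v => t < c v), ?_, ?_⟩
  · rw [Finset.disjoint_filter]; intro v _ h1 h2; linarith
  · have e1 : ∑ v, ((a : ℝ) * I 0 (c v) t - b * I 0 (-c v) t)
        = a * (#(univ.filter (fun v => t < c v)) : ℝ) - b * (#(univ.filter (fun v => c v < -t)) : ℝ) := by
      rw [Finset.sum_sub_distrib, ← Finset.mul_sum, ← Finset.mul_sum]
      congr 2
      · rw [← Finset.sum_boole]
        apply Finset.sum_congr rfl; intro v _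
        simp [I, Set.indicator_apply, ht0]
      · rw [← Finset.sum_boole]
        apply Finset.sum_congr rfl; intro v _
        simp [I, Set.indicator_apply, ht0, lt_neg]
    have e2 : ∑ v, ∑ u, aw G v u * I (max 0 (-c u)) (c v) t
        = ∑ v ∈ univ.filter (fun v => t < c v), ∑ u ∈ (univ.filter (fun v => c v < -t))ᶜ, aw G v u := by
      rw [Finset.sum_filter]
      apply Finset.sum_congr rfl; intro v _
      by_cases hv : t < c v
      · rw [if_pos hv, Finset.compl_filter, Finset.sum_filter]
        apply Finset.sum_congr rfl; intro u _
        by_cases hu : c u < -t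
        · simp [I, hu, lt_neg.1 hu]
        · have : -c u ≤ t := by linarith
          simp [I, ht0, hv, hu, this]
      · rw [if_neg hv]
        apply Finset.sum_eq_zero; intro u _
        simp [I, hv]
    simp only [g] at ht
    rw [e1, e2] at ht
    linarith

lemma criterion_nat {n : ℕ} (G : SimpleGraph (Fin n)) [DecidableRel G.Adj] (a b : ℕ) (hab : a ≤ b)
    (hno : ¬ G.HasFractionalABFactor a b) :
    ∃ (T : Finset (Fin n)) (s : ℕ), s + #T ≤ n ∧ b * s < a * #T ∧ 
      ∑ v ∈ T, G.degree v + b * s + 1 ≤ a * #T + s * #T := by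
  obtain ⟨S, T, hd, h⟩ := criterion G a b hab hno
  refine ⟨T, #S, ?_, ?_, ?_⟩
  · rw [← Finset.card_union_of_disjoint hd]
    simpa using Finset.card_le_univ (S ∪ T)
  · have : 0 ≤ ∑ v ∈ T, ∑ u ∈ Sᶜ, aw G v u :=
      Finset.sum_nonneg (fun v _ => Finset.sum_nonneg (fun u _ => aw_nonneg _ _ _))
    have : (b:ℝ) * #S < a * #T := by linarith
    exact_mod_cast this
  · have h1 : ∑ v ∈ T, (G.degree v : ℝ) ≤ ∑ v ∈ T, ∑ u ∈ Sᶜ, aw G v u + #S * #T := by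
      have : ∀ v ∈ T, (G.degree v : ℝ) ≤ ∑ u ∈ Sᶜ, aw G v u + #S := by
        intro v _
        rw [← sum_aw, ← Finset.sum_compl_add_sum S]
        have : ∑ u ∈ S, aw G v u ≤ ∑ u ∈ S, 1 := Finset.sum_le_sum (fun u _ => aw_le_one _ _ _)
        simp at this
        linarith
      have := Finset.sum_le_sum this
      rw [Finset.sum_add_distrib] at this
      simpa [mul_comm] using this
    have h2 : ∑ v ∈ T, (G.degree v : ℝ) + b * (#S : ℝ) < a * (#T : ℝ) + #S * #T := by linarith
    have h3 : ∑ v ∈ T, G.degree v + b * #S < a * #T + #S * #T := by exact_mod_cast h2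
    omega


lemma arith_big (a b n s t : ℝ) (ha : 1 ≤ a) (hab : a + 1 ≤ b)
    (hn : 2 * (a + b + 2) * (b + 2) ≤ n) (ht : b + 2 ≤ t) (hs : 0 ≤ s) (hst : s + t ≤ n)
    (hbs : b * s + 1 ≤ a * t) :
    (n - t) * (n - t - 1) + 2 * (a * t + s * t - b * s - 1) < (n - b - 2) ^ 2 := by
  have hb : 0 < b := by linarith
  have hn10 : 10 * (b + 2) ≤ n := by nlinarith
  have hn30 : 30 * a ≤ n := by nlinarith [sq_nonneg (a - 3/2)]
  have hN : 0.81 * n ^ 2 ≤ (n - b - 2) ^ 2 := by nlinarith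
  rcases le_total t (n / 2) with hc | hc
  · set r := a / b with hr
    have har : a = r * b := by rw [hr]; field_simp
    have hr0 : 0 < r := by rw [hr]; positivity
    have hr1 : r < 1 := by rw [hr, div_lt_one hb]; linarith
    have hsr : s ≤ r * t := by
      have : b * s ≤ b * (r * t) := by rw [har] at hbs; nlinarith
      exact le_of_mul_le_mul_left this hb
    have h1 : a * t + s * t - b * s ≤ r * t ^ 2 := by
      rw [har]
      nlinarith [mul_nonneg (sub_nonneg.2 hsr) (by linarith : 0 ≤ t - b)]
    have p0 : (b + 2) * (2 * r * (b + 2)) ≤ (b + 2) * (2 * (a + 2)) := by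
      apply mul_le_mul_of_nonneg_left _ (by linarith)
      nlinarith
    have hp0 : (n - (b + 2)) * (n - (b + 2) - 1) + 2 * r * (b + 2) ^ 2 ≤ (n - b - 2) ^ 2 := by
      nlinarith
    have hp1 : (n - n / 2) * (n - n / 2 - 1) + 2 * r * (n / 2) ^ 2 ≤ (n - b - 2) ^ 2 := by
      nlinarith [sq_nonneg n, mul_nonneg (sub_nonneg.2 hr1.le) (sq_nonneg n)]
    have hgap : 0 < n / 2 - (b + 2) := by linarith
    have key : (n / 2 - (b + 2)) * ((n - t) * (n - t - 1) + 2 * r * t ^ 2)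
        ≤ (n / 2 - (b + 2)) * ((n - b - 2) ^ 2) := by
      have h2 := mul_le_mul_of_nonneg_left hp0 (sub_nonneg.2 hc)
      have h3 := mul_le_mul_of_nonneg_left hp1 (sub_nonneg.2 ht)
      have h4 : 0 ≤ (1 + 2 * r) * ((t - (b + 2)) * (n / 2 - t) * (n / 2 - (b + 2))) :=
        mul_nonneg (by linarith) (mul_nonneg (mul_nonneg (sub_nonneg.2 ht) (sub_nonneg.2 hc)) hgap.le)
      linarith
    have := le_of_mul_le_mul_left key hgap
    linarith
  · have h1 : s * (t - b) ≤ (n - t) * (t - b) :=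
      mul_le_mul_of_nonneg_right (by linarith) (by linarith)
    have h2 : 0 ≤ (n - t) * b := mul_nonneg (by linarith) hb.le
    have h3 : (n/2) * (n/2 - 2 * a) ≤ t * (t - 2 * a) := by
      apply mul_le_mul hc (by linarith) (by linarith) (by linarith)
    nlinarith


lemma topsum_le {V : Type*} [DecidableEq V] (B N : Finset V) (q : V → ℝ) (θ : ℝ)
    (h1 : ∀ u ∈ B, θ ≤ q u) (h2 : ∀ u, u ∉ B → q u ≤ θ) :
    ∑ u ∈ N, q u ≤ ∑ u ∈ B, q u + ((#N : ℝ) - #B) * θ := by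
  have h3 : ∑ u ∈ N, (q u - θ) ≤ ∑ u ∈ B, (q u - θ) := by
    rw [← Finset.sum_inter_add_sum_sdiff N B, ← Finset.sum_inter_add_sum_sdiff B N,
      Finset.inter_comm B N]
    have : ∑ u ∈ N \ B, (q u - θ) ≤ 0 := Finset.sum_nonpos (fun u hu => by
      have := h2 u (Finset.mem_sdiff.1 hu).2; linarith)
    have : 0 ≤ ∑ u ∈ B \ N, (q u - θ) := Finset.sum_nonneg (fun u hu => by
      have := h1 u (Finset.mem_sdiff.1 hu).1; linarith)
    linarith
  rw [Finset.sum_sub_distrib, Finset.sum_sub_distrib] at h3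
  simp at h3
  linarith

lemma topsum_eq {V : Type*} [DecidableEq V] (B N : Finset V) (q : V → ℝ) (θ : ℝ)
    (h1 : ∀ u ∈ B, θ ≤ q u) (h2 : ∀ u, u ∉ B → q u < θ) (hc : #N = #B)
    (hs : ∑ u ∈ B, q u ≤ ∑ u ∈ N, q u) : N = B := by
  apply Finset.eq_of_subset_of_card_le _ hc.ge
  rw [← Finset.sdiff_eq_empty_iff_subset]
  by_contra hne
  have h3 : ∑ u ∈ N, (q u - θ) < ∑ u ∈ B, (q u - θ) := by
    rw [← Finset.sum_inter_add_sum_sdiff N B, ← Finset.sum_inter_add_sum_sdiff B N,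
      Finset.inter_comm B N]
    have : ∑ u ∈ N \ B, (q u - θ) < 0 := Finset.sum_neg (fun u hu => by
      have := h2 u (Finset.mem_sdiff.1 hu).2; linarith) (Finset.nonempty_iff_ne_empty.2 hne)
    have : 0 ≤ ∑ u ∈ B \ N, (q u - θ) := Finset.sum_nonneg (fun u hu => by
      have := h1 u (Finset.mem_sdiff.1 hu).1; linarith)
    linarith
  rw [Finset.sum_sub_distrib, Finset.sum_sub_distrib] at h3
  simp [hc] at h3
  linarith

abbrev WW (n m : ℕ) : Finset (Fin n) := univ.filter (fun i => (i:ℕ) < m)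
abbrev TT (n m : ℕ) : Finset (Fin n) := univ.filter (fun i => ¬ (i:ℕ) < m)

lemma sum_WT {n : ℕ} (m : ℕ) (f : Fin n → ℝ) :
    ∑ u, f u = ∑ u ∈ WW n m, f u + ∑ u ∈ TT n m, f u :=
  (Finset.sum_filter_add_sum_filter_not _ _ _).symm

lemma card_lt (n k : ℕ) (h : k ≤ n) : #(univ.filter (fun i : Fin n => (i:ℕ) < k)) = k := by
  rw [Fin.card_filter_val_lt]; omega

lemma card_TT (n m b : ℕ) (h : n = m + b + 1) : #(TT n m) = b + 1 := by
  have h1 := card_lt n m (by omega)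
  have h2 := Finset.card_filter_add_card_filter_not (s := (univ : Finset (Fin n))) (fun i : Fin n => (i:ℕ) < m)
  rw [h1] at h2
  simp at h2
  unfold TT
  simp
  omega

lemma clique_sum {n m : ℕ} (K : SimpleGraph (Fin n))
    (hcl : ∀ i j : Fin n, (i:ℕ) < m → (j:ℕ) < m → i ≠ j → K.Adj i j) (z : Fin n → ℝ)
    (w : Fin n) (hw : (w:ℕ) < m) :
    ∑ u ∈ WW n m, aw K w u * z u = ∑ u ∈ WW n m, z u - z w := by
  have hmem : w ∈ WW n m := by simp [hw]
  rw [← Finset.add_sum_erase _ _ hmem, ← Finset.add_sum_erase _ (fun u => z u) hmem]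
  rw [aw_nadj (K.loopless.irrefl w)]
  have : ∑ u ∈ (WW n m).erase w, aw K w u * z u = ∑ u ∈ (WW n m).erase w, z u := by
    apply Finset.sum_congr rfl
    intro u hu
    rw [Finset.mem_erase] at hu
    rw [aw_adj (hcl w u hw (by simpa using hu.2) hu.1.symm), one_mul]
  rw [this]; ring

lemma profile {n m a b : ℕ} (hm : n = m + b + 1) (hbig : 8 * a + 4 * b + 8 ≤ m)
    (K : SimpleGraph (Fin n))
    (hcl : ∀ i j : Fin n, (i:ℕ) < m → (j:ℕ) < m → i ≠ j → K.Adj i j)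
    (hdeg : ∀ v : Fin n, m ≤ (v:ℕ) → ∑ u, aw K v u ≤ 2 * a)
    (z : Fin n → ℝ) (hz : ∀ v, 0 ≤ z v) (hz0 : ∃ v, 0 < z v) (ρ : ℝ) (hρ : (m:ℝ) - 1 ≤ ρ)
    (he : ∀ v, ∑ u, aw K v u * z u = ρ * z v) :
    ∃ M : ℝ, 0 < M ∧ (∀ i, z i ≤ M) ∧ (∀ i : Fin n, (i:ℕ) < m → 3/4 * M ≤ z i) ∧
      (∀ i : Fin n, m ≤ (i:ℕ) → z i ≤ M / 4) := by
  have hbig' : (8 * a + 4 * b + 8 : ℝ) ≤ m := by exact_mod_cast hbig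
  have ha0 : (0:ℝ) ≤ a := by positivity
  have hb0 : (0:ℝ) ≤ b := by positivity
  obtain ⟨v0, hv0⟩ := hz0
  obtain ⟨i0, -, hi0⟩ := Finset.exists_max_image univ z ⟨v0, Finset.mem_univ _⟩
  have hmax : ∀ i, z i ≤ z i0 := fun i => hi0 i (Finset.mem_univ _)
  have hM : 0 < z i0 := lt_of_lt_of_le hv0 (hmax v0)
  have hT : ∀ i : Fin n, m ≤ (i:ℕ) → z i ≤ z i0 / 4 := by
    intro i hi
    have h1 : ρ * z i ≤ 2 * a * z i0 := by
      rw [← he]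
      calc ∑ u, aw K i u * z u ≤ ∑ u, aw K i u * z i0 :=
            Finset.sum_le_sum (fun u _ => mul_le_mul_of_nonneg_left (hmax u) (aw_nonneg _ _ _))
        _ = (∑ u, aw K i u) * z i0 := by rw [Finset.sum_mul]
        _ ≤ _ := mul_le_mul_of_nonneg_right (hdeg i hi) hM.le
    have h2 : (8 * a + 1) * z i ≤ ρ * z i := mul_le_mul_of_nonneg_right (by linarith) (hz i)
    have h3 : (8 * a + 1) * z i ≤ (8 * a + 1) * (z i0 / 4) := by linarith
    exact le_of_mul_le_mul_left h3 (by linarith)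
  have hi0W : (i0 : ℕ) < m := by
    by_contra hc
    have := hT i0 (by omega)
    linarith
  refine ⟨z i0, hM, hmax, ?_, hT⟩
  intro i hi
  have e1 := he i0
  have e2 := he i
  rw [sum_WT m, clique_sum K hcl z _ hi0W] at e1
  rw [sum_WT m, clique_sum K hcl z _ hi] at e2
  have t1 : ∑ u ∈ TT n m, aw K i0 u * z u ≤ (b + 1) * z i0 := by
    calc ∑ u ∈ TT n m, aw K i0 u * z u ≤ ∑ u ∈ TT n m, z i0 := by
          apply Finset.sum_le_sum; intro u _
          calc aw K i0 u * z u ≤ 1 * z u := mul_le_mul_of_nonneg_right (aw_le_one _ _ _) (hz u)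
            _ ≤ _ := by rw [one_mul]; exact hmax u
      _ = _ := by rw [Finset.sum_const, card_TT n m b hm]; simp
  have t2 : 0 ≤ ∑ u ∈ TT n m, aw K i u * z u :=
    Finset.sum_nonneg (fun u _ => mul_nonneg (aw_nonneg _ _ _) (hz u))
  have h1 : (ρ + 1) * (z i0 - z i) ≤ (b + 1) * z i0 := by linarith
  have h2 : (ρ + 1) * (z i0 - z i) ≤ (ρ + 1) * (z i0 / 4) := by nlinarith
  have := le_of_mul_le_mul_left h2 (by linarith)
  linarith

lemma H_adj_W {n m a b : ℕ} (hm : n = m + b + 1) (i j : Fin n) (hi : (i:ℕ) < m) (hj : (j:ℕ) < m)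
    (hij : i ≠ j) : (Hgraph n a b).Adj i j := by
  simp only [Hgraph, SimpleGraph.fromRel_adj]
  refine ⟨hij, Or.inl (Or.inr (Or.inl ⟨?_, ?_⟩))⟩ <;> omega

lemma H_adj_T {n m a b : ℕ} (hm : n = m + b + 1) (hbig : 8 * a + 4 * b + 8 ≤ m) (ha : 0 < a)
    (i j : Fin n) (hi : m ≤ (i:ℕ)) :
    (Hgraph n a b).Adj i j ↔ ((j:ℕ) < a ∨ ((i:ℕ) = m ∧ (j:ℕ) < 2 * a - 1)) := by
  simp only [Hgraph, SimpleGraph.fromRel_adj]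
  have : i ≠ j ↔ (i:ℕ) ≠ j := by rw [Ne, Fin.ext_iff]
  rw [this]
  omega

lemma H_struct {n m a b : ℕ} (hm : n = m + b + 1) (hbig : 8 * a + 4 * b + 8 ≤ m) (ha : 0 < a)
    (hab : a < b) (y : Fin n → ℝ) (hy : ∀ v, 0 ≤ y v) (hy0 : ∃ v, 0 < y v) (ρ : ℝ)
    (hρ : (m:ℝ) - 1 ≤ ρ)
    (he : ∀ v, ∑ u, aw (Hgraph n a b) v u * y u = ρ * y v) :
    ∃ Y1 Y2 : ℝ, 0 < Y2 ∧ Y2 < Y1 ∧ (2 ≤ a → 3/4 * Y1 ≤ Y2) ∧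
      (∀ i : Fin n, (i:ℕ) < a → y i = Y1) ∧
      (∀ i : Fin n, a ≤ (i:ℕ) → (i:ℕ) < 2 * a - 1 → y i = Y2) ∧
      (∀ i : Fin n, 2 * a - 1 ≤ (i:ℕ) → (i:ℕ) < m → y i < Y2) ∧
      (∀ v : Fin n, m < (v:ℕ) → ρ * y v = a * Y1) ∧
      (∀ v : Fin n, (v:ℕ) = m → ρ * y v = a * Y1 + (a - 1) * Y2) := by
  set H := Hgraph n a b with hH
  have hbig' : (8 * a + 4 * b + 8 : ℝ) ≤ m := by exact_mod_cast hbig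
  have ha0 : (1:ℝ) ≤ a := by exact_mod_cast ha
  have hb0 : (0:ℝ) ≤ b := by positivity
  have hρ0 : 0 < ρ + 1 := by linarith
  have hρ1 : 0 < ρ := by linarith
  have hcl : ∀ i j : Fin n, (i:ℕ) < m → (j:ℕ) < m → i ≠ j → H.Adj i j :=
    fun i j hi hj hij => H_adj_W hm i j hi hj hij
  have hawT : ∀ i j : Fin n, m ≤ (i:ℕ) →
      aw H i j = if ((j:ℕ) < a ∨ ((i:ℕ) = m ∧ (j:ℕ) < 2 * a - 1)) then 1 else 0 := by
    intro i j hi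
    have := H_adj_T hm hbig ha i j hi
    split_ifs with h
    · exact aw_adj (this.2 h)
    · exact aw_nadj (fun h' => h (this.1 h'))
  have hdeg : ∀ v : Fin n, m ≤ (v:ℕ) → ∑ u, aw H v u ≤ 2 * a := by
    intro v hv
    calc ∑ u, aw H v u ≤ ∑ u : Fin n, (if (u:ℕ) < 2 * a then (1:ℝ) else 0) := by
          apply Finset.sum_le_sum; intro u _
          rw [hawT v u hv]
          split_ifs <;> first | omega | norm_num
      _ = 2 * a := by
          rw [Finset.sum_boole, card_lt n (2 * a) (by omega)]; simp
  obtain ⟨M, hM, hyM, hyW, hyT⟩ := profile hm hbig H hcl hdeg y hy hy0 ρ hρ he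
  set σ := ∑ u ∈ WW n m, y u with hσ
  have hmn : m < n := by omega
  set y0 := y ⟨m, hmn⟩ with hy0'
  have hW : ∀ w : Fin n, (w:ℕ) < m → (ρ + 1) * y w = σ + ∑ v ∈ TT n m, aw H w v * y v := by
    intro w hw
    have e := he w
    rw [sum_WT m, clique_sum H hcl y _ hw] at e
    linarith
  have hTe : ∀ v : Fin n, m ≤ (v:ℕ) → 0 < y v := by
    intro v hv
    have h1 : 3/4 * M ≤ ρ * y v := by
      rw [← he]
      have h0 : (0:ℕ) < n := by omega
      have h2 := Finset.single_le_sum (f := fun u => aw H v u * y u)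
        (fun u _ => mul_nonneg (aw_nonneg _ _ _) (hy u)) (Finset.mem_univ (⟨0, h0⟩ : Fin n))
      have h3 : aw H v ⟨0, h0⟩ = 1 := by rw [hawT v _ hv]; simp [ha]
      simp only [h3, one_mul] at h2
      exact (hyW ⟨0, h0⟩ (by simp; omega)).trans h2
    by_contra hc
    have : y v = 0 := le_antisymm (not_lt.1 hc) (hy v)
    rw [this] at h1
    linarith
  have hσpos : 0 ≤ σ := Finset.sum_nonneg (fun u _ => hy u)
  have hy0pos : 0 < y0 := hTe _ (le_refl m)
  have w1 : ∀ i : Fin n, (i:ℕ) < a → y i = (σ + ∑ v ∈ TT n m, y v) / (ρ + 1) := by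
    intro i hi
    rw [eq_div_iff hρ0.ne', mul_comm, hW i (by omega)]
    congr 1
    apply Finset.sum_congr rfl
    intro v hv
    rw [aw_symm, hawT v i (by simpa using hv), if_pos (Or.inl hi), one_mul]
  have hmT : (⟨m, hmn⟩ : Fin n) ∈ TT n m := by simp
  have w2 : ∀ i : Fin n, a ≤ (i:ℕ) → (i:ℕ) < 2 * a - 1 → y i = (σ + y0) / (ρ + 1) := by
    intro i hi hi2
    rw [eq_div_iff hρ0.ne', mul_comm, hW i (by omega)]
    congr 1
    rw [Finset.sum_eq_single_of_mem _ hmT]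
    · rw [aw_symm, hawT _ i (le_refl m), if_pos (Or.inr ⟨rfl, hi2⟩), one_mul]
    · intro v hv hne
      have hvm : (v:ℕ) ≠ m := fun h => hne (Fin.ext h)
      rw [aw_symm, hawT v i (by simpa using hv), if_neg (by omega), zero_mul]
  have w3 : ∀ i : Fin n, 2 * a - 1 ≤ (i:ℕ) → (i:ℕ) < m → y i < (σ + y0) / (ρ + 1) := by
    intro i hi hi2
    rw [lt_div_iff₀ hρ0, mul_comm, hW i (by omega)]
    have : ∑ v ∈ TT n m, aw H i v * y v = 0 := by
      apply Finset.sum_eq_zero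
      intro v hv
      rw [aw_symm, hawT v i (by simpa using hv), if_neg (by omega), zero_mul]
    linarith
  refine ⟨(σ + ∑ v ∈ TT n m, y v) / (ρ + 1), (σ + y0) / (ρ + 1), ?_, ?_, ?_, w1, w2, w3, ?_, ?_⟩
  · positivity
  · apply div_lt_div_of_pos_right _ hρ0
    rw [← Finset.add_sum_erase _ _ hmT]
    have hm1 : m + 1 < n := by omega
    have : 0 < ∑ v ∈ (TT n m).erase ⟨m, hmn⟩, y v := by
      apply Finset.sum_pos
      · intro v hv
        apply hTe
        have := (Finset.mem_erase.1 hv).2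
        simpa using this
      · refine ⟨⟨m + 1, hm1⟩, ?_⟩
        simp
    linarith
  · intro ha2
    have h0 : 0 < n := by omega
    have han : a < n := by omega
    rw [← w1 ⟨0, h0⟩ ha, ← w2 ⟨a, han⟩ (le_refl a) (show a < 2 * a - 1 by omega)]
    have h1 := hyW ⟨a, han⟩ (show a < m by omega)
    have h2 := hyM ⟨0, h0⟩
    linarith
  · intro v hv
    rw [← he v]
    have : ∀ u : Fin n, aw H v u * y u
        = if (u:ℕ) < a then (σ + ∑ v ∈ TT n m, y v) / (ρ + 1) else 0 := by
      intro u
      rw [hawT v u hv.le]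
      split_ifs with h1 h2 h2
      · rw [one_mul, w1 u h2]
      · omega
      · omega
      · simp
    simp only [this]
    rw [← Finset.sum_filter, Finset.sum_const, card_lt n a (by omega), nsmul_eq_mul]
  · intro v hv
    rw [← he v]
    have : ∀ u : Fin n, aw H v u * y u
        = (if (u:ℕ) < a then ((σ + ∑ v ∈ TT n m, y v) / (ρ + 1) - (σ + y0) / (ρ + 1)) else 0)
        + (if (u:ℕ) < 2 * a - 1 then (σ + y0) / (ρ + 1) else 0) := by
      intro u
      rw [hawT v u hv.ge]
      by_cases h1 : (u:ℕ) < a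
      · rw [if_pos (Or.inl h1), if_pos h1, if_pos (by omega), w1 u h1]; ring
      · by_cases h2 : (u:ℕ) < 2 * a - 1
        · rw [if_pos (Or.inr ⟨hv, h2⟩), if_neg h1, if_pos h2, w2 u (by omega) h2]; ring
        · rw [if_neg (by omega), if_neg h1, if_neg h2]; ring
    simp only [this]
    rw [Finset.sum_add_distrib, ← Finset.sum_filter, ← Finset.sum_filter, Finset.sum_const,
      Finset.sum_const, card_lt n a (by omega), card_lt n (2 * a - 1) (by omega), nsmul_eq_mul,
      nsmul_eq_mul, Nat.cast_sub (by omega)]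
    push_cast
    ring

lemma bilin_split {n m : ℕ} (K : SimpleGraph (Fin n))
    (hcl : ∀ i j : Fin n, (i:ℕ) < m → (j:ℕ) < m → i ≠ j → K.Adj i j) (x y : Fin n → ℝ) :
    ∑ v, ∑ u, aw K v u * (y v * x u)
      = ∑ v ∈ WW n m, y v * (∑ u ∈ WW n m, x u - x v)
        + ∑ v ∈ TT n m, (y v * ∑ u, aw K v u * x u
          + x v * ∑ u, aw K v u * (if (u:ℕ) < m then y u else 0)) := by
  have h1 : ∀ v, ∑ u, aw K v u * (y v * x u) = y v * ∑ u, aw K v u * x u := by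
    intro v; rw [Finset.mul_sum]; apply Finset.sum_congr rfl; intros; ring
  simp only [h1]
  rw [sum_WT m, Finset.sum_add_distrib]
  have h2 : ∑ v ∈ WW n m, y v * ∑ u, aw K v u * x u
      = ∑ v ∈ WW n m, y v * (∑ u ∈ WW n m, x u - x v)
        + ∑ v ∈ WW n m, ∑ u ∈ TT n m, aw K v u * (y v * x u) := by
    rw [← Finset.sum_add_distrib]
    apply Finset.sum_congr rfl
    intro v hv
    rw [sum_WT m, clique_sum K hcl x v (by simpa using hv), mul_add, Finset.mul_sum _ _ (y v)]
    congr 1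
    apply Finset.sum_congr rfl; intros; ring
  have h3 : ∑ v ∈ WW n m, ∑ u ∈ TT n m, aw K v u * (y v * x u)
      = ∑ v ∈ TT n m, x v * ∑ u, aw K v u * (if (u:ℕ) < m then y u else 0) := by
    rw [Finset.sum_comm]
    apply Finset.sum_congr rfl; intro v _
    rw [Finset.mul_sum, Finset.sum_filter]
    apply Finset.sum_congr rfl; intro u _
    rw [aw_symm K u v]
    split_ifs <;> ring
  rw [h2, h3]; ring


open Classical in
noncomputable def nb {V : Type*} [Fintype V] (G : SimpleGraph V) (v : V) : Finset V :=
  univ.filter (fun u => G.Adj v u)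

lemma mem_nb {V : Type*} [Fintype V] (G : SimpleGraph V) (v u : V) :
    u ∈ nb G v ↔ G.Adj v u := by simp [nb]

lemma sum_nb {V : Type*} [Fintype V] (G : SimpleGraph V) (v : V) (f : V → ℝ) :
    ∑ u, aw G v u * f u = ∑ u ∈ nb G v, f u := by
  classical
  unfold nb
  rw [Finset.sum_filter]
  apply Finset.sum_congr rfl
  intro u _
  unfold aw
  split_ifs <;> simp

lemma card_nb {V : Type*} [Fintype V] [DecidableEq V] (G : SimpleGraph V) [DecidableRel G.Adj]
    (v : V) : #(nb G v) = G.degree v := by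
  rw [← SimpleGraph.card_neighborFinset_eq_degree]
  congr 1
  ext u; simp [mem_nb]

lemma sum_aw_nb {V : Type*} [Fintype V] (G : SimpleGraph V) (v : V) :
    ∑ u, aw G v u = #(nb G v) := by
  have := sum_nb G v (fun _ => 1)
  simpa using this

set_option maxHeartbeats 2000000 in
lemma core {n m a b : ℕ} (hm : n = m + b + 1) (hbig : 8 * a + 4 * b + 8 ≤ m) (ha : 0 < a)
    (hab : a < b) (K : SimpleGraph (Fin n))
    (hcl : ∀ i j : Fin n, (i:ℕ) < m → (j:ℕ) < m → i ≠ j → K.Adj i j)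
    (hdeg : ∀ v : Fin n, m ≤ (v:ℕ) → a ≤ #(nb K v))
    (hsum : ∑ v ∈ TT n m, #(nb K v) ≤ a * (b + 1) + a - 1)
    (x : Fin n → ℝ) (hx : ∀ v, 0 ≤ x v) (hx0 : ∃ v, 0 < x v) (ρ ρ' : ℝ)
    (hρ' : (m:ℝ) - 1 ≤ ρ') (hρρ : ρ' ≤ ρ)
    (hex : ∀ v, ∑ u, aw K v u * x u = ρ * x v)
    (hanti : ∀ i j : Fin n, (i:ℕ) ≤ j → (j:ℕ) < m → x j ≤ x i)
    (hv0 : ∀ i j : Fin n, (i:ℕ) = m → m ≤ (j:ℕ) → x j ≤ x i)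
    (y : Fin n → ℝ) (hy : ∀ v, 0 ≤ y v) (hy0 : ∃ v, 0 < y v)
    (hey : ∀ v, ∑ u, aw (Hgraph n a b) v u * y u = ρ' * y v) :
    K = Hgraph n a b := by
  set H := Hgraph n a b with hH
  have hbig' : (8 * a + 4 * b + 8 : ℝ) ≤ m := by exact_mod_cast hbig
  have ha0 : (1:ℝ) ≤ a := by exact_mod_cast ha
  have hb0 : (0:ℝ) ≤ b := by positivity
  have hmn : m < n := by omega
  obtain ⟨v0, hv0m⟩ : ∃ v0 : Fin n, (v0:ℕ) = m := ⟨⟨m, hmn⟩, rfl⟩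
  have hv0T : v0 ∈ TT n m := by simp [hv0m]
  have hρ'0 : 0 < ρ' := by linarith
  have hρ0 : 0 < ρ := by linarith
  have hmemT : ∀ v : Fin n, v ∈ TT n m ↔ m ≤ (v:ℕ) := by intro v; simp
  have hcT : #((TT n m).erase v0) = b := by
    rw [Finset.card_erase_of_mem hv0T, card_TT n m b hm]; rfl
  have hclH : ∀ i j : Fin n, (i:ℕ) < m → (j:ℕ) < m → i ≠ j → H.Adj i j :=
    fun i j hi hj hij => H_adj_W hm i j hi hj hij
  -- degrees
  have hsumR : ∑ v ∈ (TT n m).erase v0, ((#(nb K v) : ℝ) - a) ≤ 2 * a - 1 - #(nb K v0) := by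
    rw [← Finset.add_sum_erase _ _ hv0T] at hsum
    have h1 : (#(nb K v0) : ℝ) + ∑ v ∈ (TT n m).erase v0, (#(nb K v) : ℝ) ≤ a * (b + 1) + a - 1 := by
      have : #(nb K v0) + ∑ v ∈ (TT n m).erase v0, #(nb K v) + 1 ≤ a * (b + 1) + a := by omega
      have : (#(nb K v0) : ℝ) + ∑ v ∈ (TT n m).erase v0, (#(nb K v) : ℝ) + 1 ≤ a * (b + 1) + a := by
        exact_mod_cast this
      linarith
    rw [Finset.sum_sub_distrib, Finset.sum_const, hcT, nsmul_eq_mul]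
    linarith
  have hdegR : ∀ v ∈ TT n m, (0:ℝ) ≤ (#(nb K v) : ℝ) - a := by
    intro v hv
    have : (a:ℝ) ≤ #(nb K v) := by exact_mod_cast hdeg v ((hmemT v).1 hv)
    linarith
  have hsub : ∀ v, v ∈ (TT n m).erase v0 → v ∈ TT n m := fun v hv => (Finset.mem_erase.1 hv).2
  have hf0 : (0:ℝ) ≤ 2 * a - 1 - #(nb K v0) :=
    (Finset.sum_nonneg (fun v hv => hdegR v (hsub v hv))).trans hsumR
  have hdeg2 : ∀ v : Fin n, m ≤ (v:ℕ) → ∑ u, aw K v u ≤ 2 * a := by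
    intro v hv
    rw [sum_aw_nb]
    by_cases hvv : v = v0
    · subst hvv; linarith
    · have h1 := Finset.single_le_sum (f := fun v => (#(nb K v) : ℝ) - a)
        (fun v hv => hdegR v (hsub v hv)) (Finset.mem_erase.2 ⟨hvv, (hmemT v).2 hv⟩)
      have h2 := hdegR v0 hv0T
      linarith
  obtain ⟨M, hM, hxM, hxW, hxT⟩ := profile hm hbig K hcl hdeg2 x hx hx0 ρ (by linarith) hex
  obtain ⟨Y1, Y2, hY2, hY12, hY34, y1, y2, y3, yT, yT0⟩ :=
    H_struct hm hbig ha hab y hy hy0 ρ' hρ' hey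
  set q : Fin n → ℝ := fun u => if (u:ℕ) < m then y u else 0 with hq
  set B1 : Finset (Fin n) := univ.filter (fun i => (i:ℕ) < a) with hB1
  set B2 : Finset (Fin n) := univ.filter (fun i => (i:ℕ) < 2 * a - 1) with hB2
  have cB1 : #B1 = a := card_lt n a (by omega)
  have cB2 : #B2 = 2 * a - 1 := card_lt n _ (by omega)
  have cB2R : (#B2 : ℝ) = 2 * a - 1 := by
    rw [cB2, Nat.cast_sub (by omega)]; push_cast; ring
  have nbH : ∀ v ∈ (TT n m).erase v0, nb H v = B1 := by
    intro v hv
    have hvm : (v:ℕ) ≠ m := fun h => (Finset.mem_erase.1 hv).1 (Fin.ext (h.trans hv0m.symm))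
    ext u
    rw [mem_nb, H_adj_T hm hbig ha v u ((hmemT v).1 (hsub v hv))]
    simp [hB1, hvm]
  have nbH0 : nb H v0 = B2 := by
    ext u
    rw [mem_nb, H_adj_T hm hbig ha v0 u hv0m.ge]
    simp [hB2, hv0m]
    omega
  -- the thresholds for x
  have han : a - 1 < n := by omega
  have h2an : 2 * a - 2 < n := by omega
  set θ1 := x ⟨a - 1, han⟩
  set μ := x ⟨2 * a - 2, h2an⟩
  have hμ : 3/4 * M ≤ μ := hxW _ (show 2 * a - 2 < m by omega)
  have hθ1 : 3/4 * M ≤ θ1 := hxW _ (show a - 1 < m by omega)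
  have X1 : ∀ N : Finset (Fin n), ∑ u ∈ N, x u ≤ ∑ u ∈ B1, x u + ((#N : ℝ) - a) * θ1 := by
    intro N
    rw [← cB1]
    apply topsum_le
    · intro u hu
      have : (u:ℕ) < a := by simpa [hB1] using hu
      exact hanti u ⟨a - 1, han⟩ (show (u:ℕ) ≤ a - 1 by omega) (show a - 1 < m by omega)
    · intro u hu
      have : ¬ (u:ℕ) < a := by simpa [hB1] using hu
      by_cases hum : (u:ℕ) < m
      · exact hanti ⟨a - 1, han⟩ u (show a - 1 ≤ (u:ℕ) by omega) hum
      · have := hxT u (by omega); linarith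
  have X2 : ∀ N : Finset (Fin n), ∑ u ∈ N, x u ≤ ∑ u ∈ B2, x u + ((#N : ℝ) - (2 * a - 1)) * μ := by
    intro N
    rw [← cB2R]
    apply topsum_le
    · intro u hu
      have : (u:ℕ) < 2 * a - 1 := by simpa [hB2] using hu
      exact hanti u ⟨2 * a - 2, h2an⟩ (show (u:ℕ) ≤ 2 * a - 2 by omega) (show 2 * a - 2 < m by omega)
    · intro u hu
      have : ¬ (u:ℕ) < 2 * a - 1 := by simpa [hB2] using hu
      by_cases hum : (u:ℕ) < m
      · exact hanti ⟨2 * a - 2, h2an⟩ u (show 2 * a - 2 ≤ (u:ℕ) by omega) hum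
      · have := hxT u (by omega); linarith
  have q1 : ∀ u ∈ B1, q u = Y1 := by
    intro u hu
    have : (u:ℕ) < a := by simpa [hB1] using hu
    simp only [hq]; rw [if_pos (by omega), y1 u this]
  have q1' : ∀ u, u ∉ B1 → q u ≤ Y2 := by
    intro u hu
    have : ¬ (u:ℕ) < a := by simpa [hB1] using hu
    simp only [hq]
    split_ifs with h
    · by_cases h2 : (u:ℕ) < 2 * a - 1
      · exact (y2 u (by omega) h2).le
      · exact (y3 u (by omega) h).le
    · exact hY2.le
  have q2 : ∀ u ∈ B2, Y2 ≤ q u := by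
    intro u hu
    have : (u:ℕ) < 2 * a - 1 := by simpa [hB2] using hu
    simp only [hq]; rw [if_pos (by omega)]
    by_cases h2 : (u:ℕ) < a
    · rw [y1 u h2]; exact hY12.le
    · rw [y2 u (by omega) this]
  have q2' : ∀ u, u ∉ B2 → q u < Y2 := by
    intro u hu
    have : ¬ (u:ℕ) < 2 * a - 1 := by simpa [hB2] using hu
    simp only [hq]
    split_ifs with h
    · exact y3 u (by omega) h
    · exact hY2
  have Q1 : ∀ N : Finset (Fin n), ∑ u ∈ N, q u ≤ ∑ u ∈ B1, q u + ((#N : ℝ) - a) * Y2 := by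
    intro N
    rw [← cB1]
    exact topsum_le _ _ _ _ (fun u hu => by rw [q1 u hu]; exact hY12.le) q1'
  have Q2 : ∀ N : Finset (Fin n), ∑ u ∈ N, q u ≤ ∑ u ∈ B2, q u + ((#N : ℝ) - (2 * a - 1)) * Y2 := by
    intro N
    rw [← cB2R]
    exact topsum_le _ _ _ _ q2 (fun u hu => (q2' u hu).le)
  -- P function
  let P : SimpleGraph (Fin n) → Fin n → ℝ := fun L v =>
    y v * ∑ u ∈ nb L v, x u + x v * ∑ u ∈ nb L v, q u
  have hPsum : ∑ v ∈ TT n m, P H v ≤ ∑ v ∈ TT n m, P K v := by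
    have e1 := bilin_split H hclH x y
    have e2 := bilin_split K hcl x y
    have f1 : ∑ v, ∑ u, aw H v u * (y v * x u) = ρ' * ∑ v, x v * y v := by
      rw [Finset.sum_comm, Finset.mul_sum]
      apply Finset.sum_congr rfl; intro u _
      calc ∑ v, aw H v u * (y v * x u) = x u * ∑ v, aw H u v * y v := by
            rw [Finset.mul_sum]; apply Finset.sum_congr rfl; intro v _
            rw [aw_symm H v u]; ring
        _ = _ := by rw [hey]; ring
    have f2 : ∑ v, ∑ u, aw K v u * (y v * x u) = ρ * ∑ v, x v * y v := by
      rw [Finset.mul_sum]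
      apply Finset.sum_congr rfl; intro v _
      calc ∑ u, aw K v u * (y v * x u) = y v * ∑ u, aw K v u * x u := by
            rw [Finset.mul_sum]; apply Finset.sum_congr rfl; intro u _; ring
        _ = _ := by rw [hex]; ring
    have f3 : ρ' * ∑ v, x v * y v ≤ ρ * ∑ v, x v * y v :=
      mul_le_mul_of_nonneg_right hρρ (Finset.sum_nonneg (fun v _ => mul_nonneg (hx v) (hy v)))
    rw [f1] at e1
    rw [f2] at e2
    simp only [sum_nb] at e1 e2
    simp only [P]
    linarith
  have hyTpos : ∀ v, v ∈ TT n m → 0 < y v := by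
    intro v hv
    have h0 : 0 < (a:ℝ) * Y1 := mul_pos (by linarith) (by linarith)
    have h1 : 0 ≤ ((a:ℝ) - 1) * Y2 := mul_nonneg (by linarith) hY2.le
    have h2 : 0 < ρ' * y v := by
      by_cases hvm : (v:ℕ) = m
      · rw [yT0 v hvm]; linarith
      · have := (hmemT v).1 hv
        rw [yT v (by omega)]; exact h0
    exact (mul_pos_iff_of_pos_left hρ'0).1 h2
  have hyv : ∀ v ∈ (TT n m).erase v0, y v = a * Y1 / ρ' := by
    intro v hv
    have hvm : (v:ℕ) ≠ m := fun h => (Finset.mem_erase.1 hv).1 (Fin.ext (h.trans hv0m.symm))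
    have := (hmemT v).1 (hsub v hv)
    rw [eq_div_iff hρ'0.ne', mul_comm]; exact yT v (by omega)
  have hy0v : y v0 = (a * Y1 + (a - 1) * Y2) / ρ' := by
    rw [eq_div_iff hρ'0.ne', mul_comm]; exact yT0 v0 hv0m
  set α := a * Y1 / ρ' * M + x v0 * Y2 with hα
  set β := y v0 * μ + x v0 * Y2 with hβ
  have hα0 : 0 ≤ α := by
    have := hx v0
    have : 0 < Y1 := by linarith
    positivity
  have PK : ∀ v ∈ (TT n m).erase v0, P K v ≤ P H v + ((#(nb K v) : ℝ) - a) * α := by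
    intro v hv
    simp only [P]
    rw [nbH v hv]
    have h1 := mul_le_mul_of_nonneg_left (X1 (nb K v)) (hy v)
    have h2 := mul_le_mul_of_nonneg_left (Q1 (nb K v)) (hx v)
    have h3 := hdegR v (hsub v hv)
    have h4 : y v * θ1 + x v * Y2 ≤ α := by
      rw [hα, ← hyv v hv]
      apply add_le_add
      · exact mul_le_mul_of_nonneg_left (hxM _) (hy v)
      · exact mul_le_mul_of_nonneg_right (hv0 v0 v hv0m ((hmemT v).1 (hsub v hv))) hY2.le
    have h5 := mul_le_mul_of_nonneg_left h4 h3
    linarith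
  have PK0 : P K v0 ≤ P H v0 - (2 * a - 1 - #(nb K v0)) * β := by
    simp only [P]
    rw [nbH0]
    have h1 := mul_le_mul_of_nonneg_left (X2 (nb K v0)) (hy v0)
    have h2 := mul_le_mul_of_nonneg_left (Q2 (nb K v0)) (hx v0)
    rw [hβ]
    linarith
  rw [← Finset.add_sum_erase _ _ hv0T, ← Finset.add_sum_erase _ _ hv0T] at hPsum
  have hS1 : ∑ v ∈ (TT n m).erase v0, P K v ≤ ∑ v ∈ (TT n m).erase v0, P H v
      + (∑ v ∈ (TT n m).erase v0, ((#(nb K v):ℝ) - a)) * α := by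
    rw [Finset.sum_mul, ← Finset.sum_add_distrib]
    exact Finset.sum_le_sum PK
  have hS2 := mul_le_mul_of_nonneg_right hsumR hα0
  have hfz : (2:ℝ) * a - 1 - #(nb K v0) = 0 := by
    by_contra hne
    have hfpos : (0:ℝ) < 2 * a - 1 - #(nb K v0) := lt_of_le_of_ne hf0 (Ne.symm hne)
    have ha2 : 2 ≤ a := by
      have h1 := hdegR v0 hv0T
      have : (1:ℝ) < a := by linarith
      exact_mod_cast this
    have ha2R : (2:ℝ) ≤ a := by exact_mod_cast ha2
    have hαβ : α < β := by
      have h34 := hY34 ha2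
      have k1 : a * Y1 * M < (a * Y1 + (a - 1) * Y2) * μ := by
        have k2 : (a * Y1 + (a - 1) * (3/4 * Y1)) * (3/4 * M) ≤ (a * Y1 + (a - 1) * Y2) * μ := by
          apply mul_le_mul _ hμ (by positivity)
          · have : 0 < Y1 := by linarith
            have : 0 ≤ ((a:ℝ) - 1) * Y2 := mul_nonneg (by linarith) hY2.le
            positivity
          · have := mul_le_mul_of_nonneg_left h34 (by linarith : (0:ℝ) ≤ a - 1)
            linarith
        have k3 : 0 < Y1 * M := mul_pos (by linarith) hM
        nlinarith
      rw [hα, hβ, hy0v]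
      have : a * Y1 / ρ' * M < (a * Y1 + (a - 1) * Y2) / ρ' * μ := by
        rw [div_mul_eq_mul_div, div_mul_eq_mul_div]
        exact div_lt_div_of_pos_right k1 hρ'0
      linarith
    have := mul_lt_mul_of_pos_left hαβ hfpos
    linarith
  rw [hfz] at hS2 PK0 hsumR
  have hdz : ∀ v ∈ (TT n m).erase v0, (#(nb K v) : ℝ) - a = 0 := by
    apply (Finset.sum_eq_zero_iff_of_nonneg (fun v hv => hdegR v (hsub v hv))).1
    exact le_antisymm hsumR (Finset.sum_nonneg (fun v hv => hdegR v (hsub v hv)))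
  have hPle : ∀ v ∈ (TT n m).erase v0, P K v ≤ P H v := by
    intro v hv
    have := PK v hv
    rw [hdz v hv] at this
    linarith
  have hPle0 : P K v0 ≤ P H v0 := by linarith
  have hPeq0 : P H v0 ≤ P K v0 := by
    have := Finset.sum_le_sum hPle
    linarith
  have hPeq : ∀ v ∈ (TT n m).erase v0, P H v ≤ P K v := by
    intro v hv
    by_contra hc
    have := Finset.sum_lt_sum hPle ⟨v, hv, not_le.1 hc⟩
    linarith
  -- conclude equality of neighbourhoods
  have fin : ∀ v ∈ TT n m, ∀ B : Finset (Fin n), ∀ w : Fin n, (w:ℕ) < m → w ∈ B →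
      ∑ u ∈ nb K v, x u ≤ ∑ u ∈ B, x u → ∑ u ∈ nb K v, q u ≤ ∑ u ∈ B, q u →
      y v * ∑ u ∈ B, x u + x v * ∑ u ∈ B, q u
        ≤ y v * ∑ u ∈ nb K v, x u + x v * ∑ u ∈ nb K v, q u →
      ∑ u ∈ B, q u ≤ ∑ u ∈ nb K v, q u := by
    intro v hv B w hw hwB h1 h2 h3
    have hyp := hyTpos v hv
    have h4 := mul_le_mul_of_nonneg_left h2 (hx v)
    have h5 : ∑ u ∈ B, x u ≤ ∑ u ∈ nb K v, x u :=
      le_of_mul_le_mul_left (by linarith) hyp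
    have h6 : 0 < ∑ u ∈ B, x u :=
      Finset.sum_pos' (fun u _ => hx u) ⟨w, hwB, by have := hxW w hw; linarith⟩
    have h7 : 0 < ρ * x v := by rw [← hex, sum_nb]; linarith
    have h8 : 0 < x v := (mul_pos_iff_of_pos_left hρ0).1 h7
    have h9 := mul_le_mul_of_nonneg_left h1 hyp.le
    exact le_of_mul_le_mul_left (by linarith) h8
  have h0n : 0 < n := by omega
  have hnbv : ∀ v ∈ (TT n m).erase v0, nb K v = nb H v := by
    intro v hv
    have hz := hdz v hv
    rw [nbH v hv]
    apply topsum_eq B1 (nb K v) q Y1 (fun u hu => (q1 u hu).ge)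
      (fun u hu => lt_of_le_of_lt (q1' u hu) hY12)
    · rw [cB1]
      have : (#(nb K v) : ℝ) = a := by linarith
      exact_mod_cast this
    · have hp := hPeq v hv
      simp only [P] at hp
      rw [nbH v hv] at hp
      have t1 := X1 (nb K v)
      have t2 := Q1 (nb K v)
      rw [hz] at t1 t2
      refine fin v (hsub v hv) B1 ⟨0, h0n⟩ (show 0 < m by omega) (by simp [hB1, ha]) (by linarith)
        (by linarith) hp
  have hnb0 : nb K v0 = nb H v0 := by
    rw [nbH0]
    have hz : (#(nb K v0) : ℝ) - (2 * a - 1) = 0 := by linarith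
    apply topsum_eq B2 (nb K v0) q Y2 q2 q2'
    · have : (#(nb K v0) : ℝ) = #B2 := by rw [cB2R]; linarith
      exact_mod_cast this
    · have hp := hPeq0
      simp only [P] at hp
      rw [nbH0] at hp
      have t1 := X2 (nb K v0)
      have t2 := Q2 (nb K v0)
      rw [hz] at t1 t2
      refine fin v0 hv0T B2 ⟨0, h0n⟩ (show 0 < m by omega) (by simp [hB2]; omega) (by linarith)
        (by linarith) hp
  have hnb : ∀ v u : Fin n, m ≤ (v:ℕ) → (K.Adj v u ↔ H.Adj v u) := by
    intro v u hv
    rw [← mem_nb, ← mem_nb]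
    by_cases h : v = v0
    · rw [h, hnb0]
    · rw [hnbv v (Finset.mem_erase.2 ⟨h, (hmemT v).2 hv⟩)]
  ext i j
  by_cases hi : (i:ℕ) < m
  · by_cases hj : (j:ℕ) < m
    · by_cases hij : i = j
      · subst hij; simp
      · exact ⟨fun _ => hclH i j hi hj hij, fun _ => hcl i j hi hj hij⟩
    · rw [K.adj_comm, H.adj_comm]; exact hnb j i (by omega)
  · exact hnb i j (by omega)


lemma sr_H_ge {n m a b : ℕ} (hm : n = m + b + 1) (hm0 : 0 < m) :
    (m:ℝ) - 1 ≤ (Hgraph n a b).spectralRadius := by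
  have h := rayleigh_le (Hgraph n a b) (fun v => if (v:ℕ) < m then 1 else 0)
  have hc : #(WW n m) = m := card_lt n m (by omega)
  have h1 : ∑ v : Fin n, (if (v:ℕ) < m then (1:ℝ) else 0) ^ 2 = m := by
    have : ∀ v : Fin n, (if (v:ℕ) < m then (1:ℝ) else 0) ^ 2 = if (v:ℕ) < m then 1 else 0 := by
      intro v; split_ifs <;> norm_num
    simp only [this]
    rw [Finset.sum_boole, hc]
  have h2 : ∑ v : Fin n, ∑ u, aw (Hgraph n a b) v u *
      ((if (v:ℕ) < m then (1:ℝ) else 0) * (if (u:ℕ) < m then (1:ℝ) else 0)) = m * ((m:ℝ) - 1) := by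
    have : ∀ v : Fin n, ∑ u, aw (Hgraph n a b) v u *
      ((if (v:ℕ) < m then (1:ℝ) else 0) * (if (u:ℕ) < m then (1:ℝ) else 0))
        = if (v:ℕ) < m then ((m:ℝ) - 1) else 0 := by
      intro v
      split_ifs with hv
      · have h3 := clique_sum (Hgraph n a b) (fun i j hi hj hij => H_adj_W hm i j hi hj hij)
          (fun _ => 1) v hv
        simp only [Finset.sum_const, hc, nsmul_eq_mul, mul_one] at h3
        rw [← h3, Finset.sum_filter]
        apply Finset.sum_congr rfl
        intro u _
        split_ifs <;> simp
      · simp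
    simp only [this]
    rw [← Finset.sum_filter, Finset.sum_const, hc, nsmul_eq_mul]
  rw [h1, h2] at h
  have hm1 : (0:ℝ) < m := by exact_mod_cast hm0
  rw [mul_comm] at h
  exact le_of_mul_le_mul_right h hm1

lemma sum_deg_le {n : ℕ} (G : SimpleGraph (Fin n)) [DecidableRel G.Adj] (T : Finset (Fin n)) :
    ∑ v, ∑ u, aw G v u ≤ ((n:ℝ) - #T) * ((n:ℝ) - #T - 1) + 2 * ∑ v ∈ T, (G.degree v : ℝ) := by
  have hc : (#(Tᶜ) : ℝ) = n - #T := by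
    rw [Finset.card_compl, Nat.cast_sub (Finset.card_le_univ T)]; simp
  have h0 : ∀ v, ∑ u, aw G v u = ∑ u ∈ T, aw G v u + ∑ u ∈ Tᶜ, aw G v u :=
    fun v => (Finset.sum_add_sum_compl T _).symm
  have h1 : ∀ v ∈ Tᶜ, ∑ u ∈ Tᶜ, aw G v u ≤ (n:ℝ) - #T - 1 := by
    intro v hv
    rw [← Finset.add_sum_erase _ _ hv, aw_nadj (G.loopless.irrefl v), zero_add]
    calc _ ≤ ∑ u ∈ (Tᶜ).erase v, (1:ℝ) := Finset.sum_le_sum (fun u _ => aw_le_one G v u)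
      _ = _ := by
        rw [Finset.sum_const, Finset.card_erase_of_mem hv, nsmul_eq_mul, mul_one,
          Nat.cast_sub (Finset.card_pos.2 ⟨v, hv⟩), hc]; simp
  have h2 : ∑ v ∈ Tᶜ, ∑ u ∈ T, aw G v u ≤ ∑ v ∈ T, (G.degree v : ℝ) := by
    rw [Finset.sum_comm]
    apply Finset.sum_le_sum
    intro u _
    rw [← sum_aw G u]
    simp only [aw_symm G _ u]
    exact Finset.sum_le_sum_of_subset_of_nonneg (Finset.subset_univ _)
      (fun v _ _ => aw_nonneg G u v)
  rw [← Finset.sum_add_sum_compl T (fun v => ∑ u, aw G v u)]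
  have h3 : ∑ v ∈ Tᶜ, ∑ u, aw G v u ≤ ∑ v ∈ T, (G.degree v : ℝ)
      + ((n:ℝ) - #T) * ((n:ℝ) - #T - 1) := by
    simp only [h0]
    rw [Finset.sum_add_distrib]
    apply add_le_add h2
    calc _ ≤ ∑ v ∈ Tᶜ, ((n:ℝ) - #T - 1) := Finset.sum_le_sum h1
      _ = _ := by rw [Finset.sum_const, nsmul_eq_mul, hc]
  simp only [sum_aw] at h3 ⊢
  linarith

lemma lower_iff {n m : ℕ} (P : Fin n → Prop) [DecidablePred P] (hP : ∀ i j, i ≤ j → P j → P i)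
    (hc : #(univ.filter P) = m) (i : Fin n) : P i ↔ (i:ℕ) < m := by
  constructor
  · intro h
    have : univ.filter (fun j : Fin n => (j:ℕ) < i + 1) ⊆ univ.filter P := by
      intro j hj
      simp only [Finset.mem_filter, Finset.mem_univ, true_and] at hj ⊢
      exact hP j i (Fin.le_def.2 (by omega)) h
    have h2 := Finset.card_le_card this
    rw [card_lt n _ (by omega), hc] at h2
    omega
  · intro h
    by_contra hn
    have : univ.filter P ⊆ univ.filter (fun j : Fin n => (j:ℕ) < i) := by
      intro j hj
      simp only [Finset.mem_filter, Finset.mem_univ, true_and] at hj ⊢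
      by_contra hji
      exact hn (hP i j (Fin.le_def.2 (by omega)) hj)
    have h2 := Finset.card_le_card this
    rw [card_lt n _ (by omega), hc] at h2
    omega

lemma exists_sort {n m b : ℕ} (hm : n = m + b + 1) (T : Finset (Fin n)) (hT : #T = b + 1)
    (x : Fin n → ℝ) (hx : ∀ v, 0 ≤ x v) :
    ∃ φ : Equiv.Perm (Fin n), (∀ i, φ i ∈ T ↔ m ≤ (i:ℕ)) ∧
      (∀ i j : Fin n, (i:ℕ) ≤ j → (j:ℕ) < m → x (φ j) ≤ x (φ i)) ∧
      (∀ i j : Fin n, (i:ℕ) = m → m ≤ (j:ℕ) → x (φ j) ≤ x (φ i)) := by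
  classical
  obtain ⟨v0, hv0, hmax⟩ := T.exists_max_image x (Finset.card_pos.1 (by omega))
  let g : Fin n → ℝ := fun v => if v ∈ T then (if v = v0 then 1 else 2) else - x v
  let φ := Tuple.sort g
  have hmono : ∀ i j, i ≤ j → g (φ i) ≤ g (φ j) := fun i j hij => Tuple.monotone_sort g hij
  have gT : ∀ v, v ∈ T → 1 ≤ g v := by
    intro v hv; simp only [g, if_pos hv]; split_ifs <;> norm_num
  have gN : ∀ v, v ∉ T → g v = - x v := by
    intro v hv; simp only [g, if_neg hv]
  have hlow : ∀ i, φ i ∉ T ↔ (i:ℕ) < m := by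
    apply lower_iff (fun i => φ i ∉ T)
    · intro i j hij hj hi
      have h1 := hmono i j hij
      have h2 := gT _ hi
      rw [gN _ hj] at h1
      have := hx (φ j)
      linarith
    · have : univ.filter (fun i => φ i ∉ T) = (Tᶜ).map φ.symm.toEmbedding := by
        ext i
        simp only [Finset.mem_filter, Finset.mem_univ, true_and, Finset.mem_map,
          Equiv.coe_toEmbedding, Finset.mem_compl]
        constructor
        · intro h; exact ⟨φ i, h, by simp⟩
        · rintro ⟨v, hv, rfl⟩; simpa using hv
      rw [this, Finset.card_map, Finset.card_compl, hT]
      simp; omega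
  have hT' : ∀ i, φ i ∈ T ↔ m ≤ (i:ℕ) := by
    intro i
    have := hlow i
    rw [← not_iff_not, this]; omega
  refine ⟨φ, hT', ?_, ?_⟩
  · intro i j hij hj
    have h1 := hmono i j (Fin.le_def.2 hij)
    rw [gN _ ((hlow i).2 (by omega)), gN _ ((hlow j).2 hj)] at h1
    linarith
  · intro i j hi hj
    have hi0 : φ i = v0 := by
      have hk : m ≤ (φ.symm v0 : ℕ) := by rw [← hT']; simpa using hv0
      have h1 := hmono i (φ.symm v0) (Fin.le_def.2 (by omega))
      rw [Equiv.apply_symm_apply] at h1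
      have hiT := (hT' i).2 hi.ge
      by_contra hne
      simp only [g, if_pos hiT, if_neg hne, if_pos hv0, if_true] at h1
      norm_num at h1
    rw [hi0]
    exact hmax _ ((hT' j).2 hj)

lemma main_case {n m a b : ℕ} (hm : n = m + b + 1) (hbig : 8 * a + 4 * b + 8 ≤ m) (ha : 0 < a)
    (hab : a < b) (G : SimpleGraph (Fin n)) [DecidableRel G.Adj] (hconn : G.Connected)
    (hδ : ∀ v, a ≤ G.degree v)
    (hρ : (Hgraph n a b).spectralRadius ≤ G.spectralRadius)
    (T : Finset (Fin n)) (hT : #T = b + 1)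
    (hsum : ∑ v ∈ T, G.degree v ≤ a * (b + 1) + a - 1) : Nonempty (G ≃g Hgraph n a b) := by
  classical
  haveI : Nonempty (Fin n) := ⟨⟨0, by omega⟩⟩
  let C : SimpleGraph (Fin n) := SimpleGraph.fromRel (fun i j => i ∉ T ∧ j ∉ T)
  let Gp : SimpleGraph (Fin n) := G ⊔ C
  have hadjT : ∀ v u, v ∈ T → (Gp.Adj v u ↔ G.Adj v u) := by
    intro v u hv
    simp [Gp, C, hv]
  have hle : G ≤ Gp := le_sup_left
  obtain ⟨x, hx, hx0, hex⟩ := exists_perron Gp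
  obtain ⟨y, hy, hy0, hey⟩ := exists_perron (Hgraph n a b)
  obtain ⟨φ, hφT, hanti, hv0⟩ := exists_sort hm T hT x hx
  let K := Gp.comap φ
  have hnb : ∀ v : Fin n, m ≤ (v:ℕ) → #(nb K v) = G.degree (φ v) := by
    intro v hv
    rw [← card_nb]
    have : nb G (φ v) = (nb K v).map φ.toEmbedding := by
      ext u
      rw [mem_nb, Finset.mem_map_equiv, mem_nb, ← hadjT _ _ ((hφT v).2 hv)]
      simp [K]
    rw [this, Finset.card_map]
  have haw : ∀ v u, aw K v u = aw Gp (φ v) (φ u) := by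
    intro v u; unfold aw; rfl
  have hK : K = Hgraph n a b := by
    refine core hm hbig ha hab K ?_ ?_ ?_ (fun i => x (φ i)) (fun i => hx _) ?_ Gp.spectralRadius
      (Hgraph n a b).spectralRadius (sr_H_ge hm (by omega)) (hρ.trans (sr_mono G Gp hle)) ?_
      hanti hv0 y hy hy0 hey
    · intro i j hi hj hij
      have h1 : φ i ∉ T := by rw [hφT]; omega
      have h2 : φ j ∉ T := by rw [hφT]; omega
      simp only [K, SimpleGraph.comap_adj, Gp, SimpleGraph.sup_adj, C, SimpleGraph.fromRel_adj]
      exact Or.inr ⟨fun h => hij (φ.injective h), Or.inl ⟨h1, h2⟩⟩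
    · intro v hv
      rw [hnb v hv]; exact hδ _
    · refine le_trans (le_of_eq ?_) hsum
      refine Finset.sum_equiv φ ?_ ?_
      · intro i; rw [hφT]; simp
      · intro i hi; exact hnb i (by simpa using hi)
    · obtain ⟨v, hv⟩ := hx0
      exact ⟨φ.symm v, by simpa using hv⟩
    · intro v
      simp only [haw]
      rw [Equiv.sum_comp φ (fun u => aw Gp (φ v) u * x u)]
      exact hex _
  have e : K ≃g Gp := SimpleGraph.Iso.comap φ Gp
  rw [hK] at e
  have h1 := sr_le_of_iso Gp _ e.symm
  have h2 := eq_of_sr_le G Gp hle hconn (h1.trans hρ)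
  rw [← h2] at e
  exact ⟨e.symm⟩

/-- **Theorem (spectral condition for a fractional `[a,b]`-factor).** -/
theorem spectral_radius_fractional_abFactor (a b n : ℕ) (ha : 0 < a) (hab : a < b)
    (hn : 2 * (a + b + 2) * (b + 2) ≤ n)
    (G : SimpleGraph (Fin n)) [DecidableRel G.Adj]
    (hconn : G.Connected) (hδ : ∀ v, a ≤ G.degree v)
    (hρ : (Hgraph n a b).spectralRadius ≤ G.spectralRadius) :
    G.HasFractionalABFactor a b ∨ Nonempty (G ≃g Hgraph n a b) := by
  by_cases hno : G.HasFractionalABFactor a b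
  · exact Or.inl hno
  right
  obtain ⟨T, s, hst, hbs, hT⟩ := criterion_nat G a b hab.le hno
  have hn2 : 8 * a + 5 * b + 9 ≤ n := by nlinarith
  obtain ⟨m, hm⟩ : ∃ m, n = m + b + 1 := ⟨n - b - 1, by omega⟩
  haveI : Nonempty (Fin n) := ⟨⟨0, by omega⟩⟩
  have hlow : a * #T ≤ ∑ v ∈ T, G.degree v := by
    rw [mul_comm, ← smul_eq_mul, ← Finset.sum_const]
    exact Finset.sum_le_sum (fun v _ => hδ v)
  have htb : b + 1 ≤ #T := by
    by_contra h
    have h1 : #T ≤ b := by omega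
    have := Nat.mul_le_mul_left s h1
    nlinarith
  rcases Nat.lt_or_ge (b + 1) #T with h | h
  · exfalso
    have h1 := sr_sq_le G
    have h2 := sum_deg_le G T
    have hTR : (∑ v ∈ T, (G.degree v:ℝ)) + b * s + 1 ≤ a * #T + s * #T := by exact_mod_cast hT
    have h3 := arith_big a b n s #T (by exact_mod_cast ha) (by exact_mod_cast hab)
      (by exact_mod_cast hn) (by exact_mod_cast h) (by positivity) (by exact_mod_cast hst)
      (by exact_mod_cast hbs)
    have h4 := sr_H_ge (a := a) hm (by omega)
    have hmR : (n:ℝ) = m + b + 1 := by exact_mod_cast hm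
    have hm0 : (1:ℝ) ≤ m := by exact_mod_cast (by omega : 1 ≤ m)
    have h5 : ((m:ℝ) - 1) ^ 2 ≤ G.spectralRadius ^ 2 :=
      pow_le_pow_left₀ (by linarith) (h4.trans hρ) 2
    have h6 : (n:ℝ) - b - 2 = m - 1 := by rw [hmR]; ring
    rw [h6] at h3
    linarith
  · have ht : #T = b + 1 := le_antisymm h htb
    rw [ht] at hT hbs
    have hsa : s ≤ a := by
      by_contra hc
      have : a + 1 ≤ s := by omega
      nlinarith
    refine main_case hm (by omega) ha hab G hconn hδ hρ T ht ?_
    have : s * (b + 1) = b * s + s := by ring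
    omega
end

section
/- Let a and b be positive integers with b > a and let n ≥ a+b+2. Every graph G in 𝒢_n^{a,b} contains no fractional [a,b]-factor; in particular, G contains no [a,b]-factor. -/
set_option linter.unusedSectionVars false

open Finset Matrix

lemma weight_contra (a b n : ℕ) (ha : 0 < a) (hab : a < b) (hn : a + b + 2 ≤ n)
    (G : SimpleGraph (Fin n)) (hG : GFamily n a b G) (w : Fin n → Fin n → ℝ)
    (hsymm : ∀ u v, w u v = w v u) (h0 : ∀ u v, 0 ≤ w u v) (h1 : ∀ u v, w u v ≤ 1)
    (hadj : ∀ u v, ¬ G.Adj u v → w u v = 0)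
    (hlo : ∀ v, (a : ℝ) ≤ ∑ u, w v u) (hhi : ∀ v, ∑ u, w v u ≤ (b : ℝ)) : False := by
  classical
  obtain ⟨F, hFc, hF, rfl⟩ := hG
  let S : Finset (Fin n) := univ.filter (fun u => (u : ℕ) < a)
  let T : Finset (Fin n) := univ.filter (fun u => ¬ (u : ℕ) < n - b - 1)
  have hcard : ∀ k, k ≤ n → (univ.filter (fun u : Fin n => (u : ℕ) < k)).card = k := by
    intro k hk
    rw [Fin.card_filter_val_lt, min_eq_right hk]
  have hS : S.card = a := hcard a (by omega)
  have hT : T.card = b + 1 := by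
    have e := Finset.card_filter_add_card_filter_not (s := (univ : Finset (Fin n)))
      (fun u : Fin n => (u : ℕ) < n - b - 1)
    rw [hcard _ (by omega), Finset.card_univ, Fintype.card_fin] at e
    change _ + T.card = n at e
    omega
  have hpt : ∀ v ∈ T, ∀ u, w v u ≤ (if (u : ℕ) < a then w v u else 0)
      + (if (u, v) ∈ F then (1 : ℝ) else 0) := by
    intro v hv u
    have hv' : ¬ (v : ℕ) < n - b - 1 := by simpa [T] using hv
    by_cases hu : (u : ℕ) < a
    · rw [if_pos hu]; split_ifs <;> linarith
    · rw [if_neg hu]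
      by_cases hm : (u, v) ∈ F
      · rw [if_pos hm]; linarith [h1 v u]
      · rw [if_neg hm, hadj v u]
        · simp
        · intro h
          rw [SimpleGraph.sup_adj] at h
          rcases h with h | h
          · rw [baseGraph, SimpleGraph.fromRel_adj] at h
            omega
          · rw [SimpleGraph.fromEdgeSet_adj] at h
            obtain ⟨⟨⟨p, q⟩, hp, hpq⟩, -⟩ := h
            have := hF _ hp
            simp only [Sym2.eq_iff] at hpq
            rcases hpq with ⟨rfl, rfl⟩ | ⟨rfl, rfl⟩
            · simp only at this; omega
            · exact hm hp
  have A : (a : ℝ) * (b + 1) ≤ ∑ v ∈ T, ∑ u, w v u := by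
    have := Finset.card_nsmul_le_sum T (fun v => ∑ u, w v u) (a : ℝ) (fun v _ => hlo v)
    rw [hT, nsmul_eq_mul] at this
    push_cast at this
    linarith
  have B : ∑ v ∈ T, ∑ u, w v u ≤ ∑ v ∈ T, ∑ u ∈ S, w v u
      + ∑ v ∈ T, ∑ u, (if (u, v) ∈ F then (1 : ℝ) else 0) := by
    rw [← Finset.sum_add_distrib]
    refine Finset.sum_le_sum fun v hv => ?_
    rw [Finset.sum_filter, ← Finset.sum_add_distrib]
    exact Finset.sum_le_sum fun u _ => hpt v hv u
  have C : ∑ v ∈ T, ∑ u ∈ S, w v u ≤ a * b := by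
    rw [Finset.sum_comm]
    have := Finset.sum_le_card_nsmul S (fun u => ∑ v ∈ T, w v u) (b : ℝ) (fun u _ => by
      refine le_trans ?_ (hhi u)
      rw [Finset.sum_congr rfl (fun v _ => hsymm v u)]
      exact Finset.sum_le_sum_of_subset_of_nonneg (Finset.subset_univ _) (fun v _ _ => h0 u v))
    rwa [hS, nsmul_eq_mul] at this
  have D : ∑ v ∈ T, ∑ u, (if (u, v) ∈ F then (1 : ℝ) else 0) ≤ a - 1 := by
    calc _ ≤ ∑ v, ∑ u, (if (u, v) ∈ F then (1 : ℝ) else 0) :=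
          Finset.sum_le_sum_of_subset_of_nonneg (Finset.subset_univ _)
            (fun v _ _ => Finset.sum_nonneg fun u _ => by split_ifs <;> norm_num)
      _ = ∑ p : Fin n × Fin n, (if p ∈ F then (1 : ℝ) else 0) := by
          rw [Finset.sum_comm, Fintype.sum_prod_type]
      _ = F.card := by simp
      _ ≤ _ := by rw [hFc, Nat.cast_sub ha]; simp
  linarith

/-- Every member of `𝒢_n^{a,b}` has no fractional `[a,b]`-factor, and in particular
no `[a,b]`-factor. -/
theorem GFamily_no_factor (a b n : ℕ) (ha : 0 < a) (hab : a < b) (hn : a + b + 2 ≤ n)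
    (G : SimpleGraph (Fin n)) (hG : GFamily n a b G) :
    ¬ G.HasFractionalABFactor a b ∧ ¬ G.HasABFactor a b := by
  constructor
  · rintro ⟨h, h01, hs⟩
    classical
    have key : ∀ v, ∑ u, (if G.Adj v u then h s(v, u) else 0) =
        ∑ e ∈ @SimpleGraph.incidenceFinset _ G v
          (@SimpleGraph.neighborSetFintype _ G _ (Classical.decRel G.Adj) v) _, h e := by
      intro v
      rw [← Finset.sum_filter]
      refine Finset.sum_bij (fun u _ => s(v, u)) ?_ ?_ ?_ ?_
      · intro u hu
        simpa [SimpleGraph.mem_incidenceSet] using hu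
      · intro u _ u' _ huu
        exact Sym2.congr_right.mp huu
      · intro e he
        rw [SimpleGraph.mem_incidenceFinset] at he
        obtain ⟨he1, he2⟩ := he
        obtain ⟨u, rfl⟩ := he2
        exact ⟨u, by simpa using he1, rfl⟩
      · intros; rfl
    refine weight_contra a b n ha hab hn G hG (fun v u => if G.Adj v u then h s(v, u) else 0)
      ?_ ?_ ?_ ?_ ?_ ?_
    · intro u v
      simp only [G.adj_comm u v, Sym2.eq_swap (a := u) (b := v)]
    · intro u v
      split_ifs with hh
      · exact (h01 _ hh).1
      · exact le_rfl
    · intro u v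
      split_ifs with hh
      · exact (h01 _ hh).2
      · exact zero_le_one
    · intro u v hh
      exact if_neg hh
    · intro v
      rw [key]
      convert (hs v).1
    · intro v
      rw [key]
      convert (hs v).2
  · rintro ⟨H, hH, hd⟩
    classical
    have key : ∀ v, ∑ u, (if H.Adj v u then (1 : ℝ) else 0) = H.degree v := by
      intro v
      rw [Finset.sum_boole, ← SimpleGraph.card_neighborFinset_eq_degree,
        SimpleGraph.neighborFinset_eq_filter]
    refine weight_contra a b n ha hab hn G hG (fun v u => if H.Adj v u then 1 else 0)
      ?_ ?_ ?_ ?_ ?_ ?_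
    · intro u v
      simp only [H.adj_comm u v]
    · intro u v
      split_ifs <;> norm_num
    · intro u v
      split_ifs <;> norm_num
    · intro u v hh
      exact if_neg (fun h => hh (hH h))
    · intro v
      rw [key]
      have := (hd v).1
      norm_cast
    · intro v
      rw [key]
      have := (hd v).2
      norm_cast
end

section
/- Let G be a connected graph and let u, v be two vertices of G. Suppose v_1, v_2, …, v_s ∈ N_G(v)\N_G(u) with s ≥ 1, and let G* be the graph obtained from G by deleting the edges vv_i and adding the edges uv_i for 1 ≤ i ≤ s. Let x be the Perron vector of the adjacency matrix A(G) (a positive eigenvector corresponding to ρ(G)). If x(u) ≥ x(v), then ρ(G) < ρ(G*). -/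
set_option linter.unusedSectionVars false

open Finset Matrix

theorem rot_psd {V : Type*} [Fintype V] [DecidableEq V] (B : Matrix V V ℝ) (hB : B.IsHermitian) :
    ((⨆ i, hB.eigenvalues i) • (1 : Matrix V V ℝ) - B).PosSemidef := by
  have hM : ((⨆ i, hB.eigenvalues i) • (1 : Matrix V V ℝ) - B).IsHermitian := by
    apply Matrix.IsHermitian.sub _ hB
    simp [Matrix.IsHermitian, Matrix.conjTranspose_smul]
  rw [hM.posSemidef_iff_eigenvalues_nonneg]
  intro i
  have h1 : hM.eigenvalues i ∈ spectrum ℝ ((⨆ i, hB.eigenvalues i) • (1 : Matrix V V ℝ) - B) :=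
    hM.eigenvalues_mem_spectrum_real i
  generalize hM.eigenvalues i = t at h1 ⊢
  rw [← Algebra.algebraMap_eq_smul_one, ← spectrum.singleton_sub_eq,
    hB.spectrum_real_eq_range_eigenvalues] at h1
  obtain ⟨a, ha, b, ⟨j, rfl⟩, hab⟩ := h1
  simp only [Set.mem_singleton_iff] at ha
  subst ha
  have : hB.eigenvalues j ≤ ⨆ i, hB.eigenvalues i :=
    le_ciSup (Set.finite_range _).bddAbove j
  simp only [Pi.zero_apply]
  rw [← hab]
  simpa using this

/-- **Lemma 2.1 (edge switching).** Let `G` be connected, `v₁,…,v_s ∈ N_G(v) \ N_G(u)`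
(`s ≥ 1`), and let `G*` be obtained from `G` by deleting the edges `v vᵢ` and adding the
edges `u vᵢ`. If `x` is the Perron vector of `A(G)` and `x(u) ≥ x(v)`, then `ρ(G) < ρ(G*)`. -/
theorem rotation_spectralRadius_lt {V : Type*} [Fintype V] [DecidableEq V]
    (G : SimpleGraph V) [DecidableRel G.Adj] (hconn : G.Connected)
    (u v : V) (s : ℕ) (hs : 1 ≤ s) (f : Fin s → V) (hinj : Function.Injective f)
    (hf : ∀ i, f i ∈ G.neighborSet v \ G.neighborSet u) (hfu : ∀ i, f i ≠ u)
    (Gstar : SimpleGraph V)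
    (hGstar : Gstar = (G.deleteEdges (Set.range fun i => s(v, f i))) ⊔
      SimpleGraph.fromEdgeSet (Set.range fun i => s(u, f i)))
    (x : V → ℝ) (hx : ∀ w, 0 < x w)
    (heig : G.adjMatrix ℝ *ᵥ x = G.spectralRadius • x)
    (hxuv : x v ≤ x u) :
    G.spectralRadius < Gstar.spectralRadius := by
  classical
  have hGs : ∃ B : Matrix V V ℝ, ∃ hB : B.IsHermitian,
      Gstar.spectralRadius = (⨆ i, hB.eigenvalues i) ∧
      ∀ a b, B a b = if Gstar.Adj a b then 1 else 0 := by
    letI := Classical.decRel Gstar.Adj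
    refine ⟨Gstar.adjMatrix ℝ, Gstar.isHermitian_adjMatrix', rfl, ?_⟩
    intro a b
    rw [SimpleGraph.adjMatrix_apply]
  obtain ⟨B, hB, hmu, hBa⟩ := hGs
  have hpsd := rot_psd B hB
  rw [← hmu] at hpsd
  set μ := Gstar.spectralRadius
  set ρ := G.spectralRadius
  by_contra hlt
  push Not at hlt
  let S : Finset V := Finset.univ.image f
  let c : V → ℝ := fun a => if a ∈ S then 1 else 0
  let d : V → ℝ := fun a => (if a = u then 1 else 0) - (if a = v then 1 else 0)
  have hS : ∀ w, w ∈ S → G.Adj v w ∧ ¬ G.Adj u w ∧ w ≠ u := by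
    intro w hw
    simp only [S, Finset.mem_image, Finset.mem_univ, true_and] at hw
    obtain ⟨i, rfl⟩ := hw
    exact ⟨(hf i).1, (hf i).2, hfu i⟩
  have hne : (f ⟨0, hs⟩) ∈ S := by simp [S]
  have huv : u ≠ v := by
    rintro rfl
    exact (hS _ hne).2.1 (hS _ hne).1
  have hvS : v ∉ S := fun h => G.loopless.irrefl v (hS v h).1
  have huS : u ∉ S := fun h => (hS u h).2.2 rfl
  have hadj : ∀ a b, Gstar.Adj a b ↔ (G.Adj a b ∧ ¬ (a = v ∧ b ∈ S) ∧ ¬ (b = v ∧ a ∈ S)) ∨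
      (a = u ∧ b ∈ S) ∨ (b = u ∧ a ∈ S) := by
    intro a b
    have h1 : ∀ z, s(a, b) ∈ (Set.range fun i => s(z, f i)) ↔ (a = z ∧ b ∈ S) ∨ (b = z ∧ a ∈ S) := by
      intro z
      simp only [Set.mem_range, S, Finset.mem_image, Finset.mem_univ, true_and, Sym2.eq_iff]
      grind
    rw [hGstar, SimpleGraph.sup_adj, SimpleGraph.deleteEdges_adj, SimpleGraph.fromEdgeSet_adj,
      h1, h1]
    grind
  have hBA : B = G.adjMatrix ℝ + Matrix.vecMulVec d c + Matrix.vecMulVec c d := by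
    ext a b
    rw [hBa]
    simp only [Matrix.add_apply, SimpleGraph.adjMatrix_apply, Matrix.vecMulVec_apply, c, d]
    have h2 := hadj a b
    have h3 := hS a
    have h4 := hS b
    have h5 := G.adj_comm a b
    grind
  have hcx : 0 < c ⬝ᵥ x := by
    apply Finset.sum_pos'
    · intro i _
      have := hx i
      simp only [c]; split_ifs <;> simp [this.le]
    · exact ⟨f ⟨0, hs⟩, Finset.mem_univ _, by simp only [c]; rw [if_pos hne]; simpa using hx _⟩
  have hdx : d ⬝ᵥ x = x u - x v := by
    simp [d, dotProduct, sub_mul, Finset.sum_sub_distrib]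
  have hBx : B *ᵥ x = ρ • x + (c ⬝ᵥ x) • d + (d ⬝ᵥ x) • c := by
    rw [hBA, Matrix.add_mulVec, Matrix.add_mulVec, heig, Matrix.vecMulVec_mulVec,
      Matrix.vecMulVec_mulVec]
    simp
  have hMx : (μ • (1 : Matrix V V ℝ) - B) *ᵥ x
      = (μ - ρ) • x - (c ⬝ᵥ x) • d - (d ⬝ᵥ x) • c := by
    rw [Matrix.sub_mulVec, Matrix.smul_mulVec, Matrix.one_mulVec, hBx, sub_smul]
    abel
  have hxx : 0 < x ⬝ᵥ x := by
    apply Finset.sum_pos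
    · intro i _; exact mul_pos (hx i) (hx i)
    · exact ⟨u, Finset.mem_univ _⟩
  have hq : star x ⬝ᵥ ((μ • (1 : Matrix V V ℝ) - B) *ᵥ x)
      = (μ - ρ) * (x ⬝ᵥ x) - 2 * (c ⬝ᵥ x) * (d ⬝ᵥ x) := by
    rw [hMx, star_trivial, dotProduct_sub, dotProduct_sub, dotProduct_smul, dotProduct_smul,
      dotProduct_smul, dotProduct_comm x d, dotProduct_comm x c]
    simp only [smul_eq_mul]; ring
  have hq0 := hpsd.dotProduct_mulVec_nonneg x
  have hd0 : 0 ≤ d ⬝ᵥ x := by rw [hdx]; linarith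
  have hp : 0 ≤ (c ⬝ᵥ x) * (d ⬝ᵥ x) := mul_nonneg hcx.le hd0
  have hp2 : (μ - ρ) * (x ⬝ᵥ x) ≤ 0 := mul_nonpos_of_nonpos_of_nonneg (by linarith) hxx.le
  have hz : star x ⬝ᵥ ((μ • (1 : Matrix V V ℝ) - B) *ᵥ x) = 0 := by
    apply le_antisymm _ hq0
    rw [hq]; linarith
  rw [hpsd.dotProduct_mulVec_zero_iff, hMx] at hz
  have hu := congrFun hz u
  have hdu : d u = 1 := by simp [d, huv]
  have hcu : c u = 0 := by simp [c, huS]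
  simp only [Pi.sub_apply, Pi.smul_apply, smul_eq_mul, hdu, hcu, Pi.zero_apply] at hu
  have : (μ - ρ) * x u ≤ 0 := mul_nonpos_of_nonpos_of_nonneg (by linarith) (hx u).le
  linarith
end

section
/- Let a and b be positive integers with b > a. A graph G contains an [a,b]-factor if and only if for every subset S ⊆ V(G), a|W| - Σ_{v ∈ W} d_{G-S}(v) ≤ b|S|, where W = {v ∈ V(G)\S : d_{G-S}(v) < a}. -/
set_option linter.unusedSectionVars false

open Finset Matrix

namespace ABF

open Classical in
noncomputable def nb {V : Type*} [Fintype V] (H : SimpleGraph V) (v : V) : Finset V :=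
  Finset.univ.filter (fun w => H.Adj v w)

noncomputable def dg {V : Type*} [Fintype V] (H : SimpleGraph V) (v : V) : ℕ := (nb H v).card

lemma mem_nb {V : Type*} [Fintype V] (H : SimpleGraph V) (v w : V) : w ∈ nb H v ↔ H.Adj v w := by
  simp [nb]

lemma dg_add {V : Type*} [Fintype V] [DecidableEq V] (H : SimpleGraph V) {u v : V} (huv : u ≠ v)
    (h : ¬ H.Adj u v) (w : V) :
    dg (H ⊔ SimpleGraph.edge u v) w = dg H w + (if w = u ∨ w = v then 1 else 0) := by
  have h' : ¬ H.Adj v u := fun e => h e.symm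
  unfold dg
  by_cases h1 : w = u
  · subst h1
    have : nb (H ⊔ SimpleGraph.edge w v) w = insert v (nb H w) := by
      ext x; simp only [mem_nb, Finset.mem_insert, SimpleGraph.sup_adj, SimpleGraph.edge_adj]; grind
    rw [this, Finset.card_insert_of_notMem (by simpa [mem_nb] using h)]; simp
  · by_cases h2 : w = v
    · subst h2
      have : nb (H ⊔ SimpleGraph.edge u w) w = insert u (nb H w) := by
        ext x; simp only [mem_nb, Finset.mem_insert, SimpleGraph.sup_adj, SimpleGraph.edge_adj]; grind
      rw [this, Finset.card_insert_of_notMem (by simpa [mem_nb] using h')]; simp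
    · have : nb (H ⊔ SimpleGraph.edge u v) w = nb H w := by
        ext x; simp only [mem_nb, SimpleGraph.sup_adj, SimpleGraph.edge_adj]; grind
      rw [this]; simp [h1, h2]

lemma dg_del {V : Type*} [Fintype V] [DecidableEq V] (H : SimpleGraph V) {u v : V}
    (h : H.Adj u v) (w : V) :
    dg (H \ SimpleGraph.edge u v) w + (if w = u ∨ w = v then 1 else 0) = dg H w := by
  have e : (H \ SimpleGraph.edge u v) ⊔ SimpleGraph.edge u v = H := by
    apply sdiff_sup_cancel
    intro x y; simp only [SimpleGraph.edge_adj]; have := h.symm; grind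
  have := dg_add (H \ SimpleGraph.edge u v) h.ne
    (by simp [SimpleGraph.sdiff_adj, SimpleGraph.edge_adj, h.ne]) w
  rw [e] at this
  exact this.symm

/-- Good ends of alternating walks: `true` means the vertex wants to gain an edge. -/
def Gd {V : Type*} [Fintype V] (G : SimpleGraph V) (a b : ℕ) (H : SimpleGraph V) :
    ℕ → Bool → V → Prop
  | 0, true, v => a < dg H v
  | 0, false, v => dg H v < b
  | n + 1, true, v => ∃ w, G.Adj v w ∧ ¬ H.Adj v w ∧ Gd G a b H n false w
  | n + 1, false, v => ∃ w, H.Adj v w ∧ Gd G a b H n true w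

noncomputable def df {V : Type*} [Fintype V] (a : ℕ) (H : SimpleGraph V) : ℕ :=
  ∑ v, (a - dg H v)

lemma improve {V : Type*} [Fintype V] [DecidableEq V] (G : SimpleGraph V) (a b : ℕ) (hab : a < b)
    (n : ℕ) : ∀ (H : SimpleGraph V), H ≤ G → (∀ v, dg H v ≤ b) → ∀ v0, dg H v0 < a →
    Gd G a b H n true v0 →
    ∃ H' : SimpleGraph V, H' ≤ G ∧ (∀ v, dg H' v ≤ b) ∧ df a H' < df a H := by
  induction n using Nat.strong_induction_on with
  | _ n ih =>
  intro H hHG hb v0 hv0 hn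
  by_cases hmin : ∃ m < n, Gd G a b H m true v0
  · obtain ⟨m, hm, hg⟩ := hmin
    exact ih m hm H hHG hb v0 hv0 hg
  push Not at hmin
  match n, hn, hmin, ih with
  | 0, hn, _, _ => simp only [Gd] at hn; omega
  | 1, hn, hmin, ih =>
    obtain ⟨v1, hG, hH, h1⟩ := hn
    simp only [Gd] at h1
    refine ⟨H ⊔ SimpleGraph.edge v0 v1, ?_, ?_, ?_⟩
    · refine sup_le hHG ?_
      intro x y; simp only [SimpleGraph.edge_adj]; have := hG.symm; grind
    · intro w; rw [dg_add H hG.ne hH]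
      have := hb w
      split_ifs with hw
      · rcases hw with rfl | rfl <;> omega
      · omega
    · refine Finset.sum_lt_sum (fun w _ => ?_) ⟨v0, Finset.mem_univ _, ?_⟩
      · rw [dg_add H hG.ne hH]; omega
      · rw [dg_add H hG.ne hH]; simp; omega
  | k + 2, hn, hmin, ih =>
    obtain ⟨v1, hG, hH, v2, hH2, h2⟩ := hn
    have h20 : v2 ≠ v0 := by rintro rfl; exact hH hH2.symm
    have h01 : v0 ≠ v1 := hG.ne
    have h12 : v1 ≠ v2 := hH2.ne
    have hb1 : b ≤ dg H v1 := by
      by_contra hc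
      exact hmin 1 (by omega) ⟨v1, hG, hH, by simp only [Gd]; omega⟩
    obtain ⟨H', hH'⟩ : ∃ H', H' = (H ⊔ SimpleGraph.edge v0 v1) \ SimpleGraph.edge v1 v2 := ⟨_, rfl⟩
    have hdg : ∀ w, dg H' w + (if w = v2 then 1 else 0) = dg H w + (if w = v0 then 1 else 0) := by
      intro w
      have e1 := dg_add H hG.ne hH w
      have e2 := dg_del (H ⊔ SimpleGraph.edge v0 v1) (u := v1) (v := v2) (Or.inl hH2) w
      rw [← hH'] at e2
      grind
    have hadj : ∀ x y, H'.Adj x y ↔ (H.Adj x y ∨ (x = v0 ∧ y = v1) ∨ (x = v1 ∧ y = v0)) ∧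
        ¬ ((x = v1 ∧ y = v2) ∨ (x = v2 ∧ y = v1)) := by
      intro x y
      rw [hH']
      simp only [SimpleGraph.sdiff_adj, SimpleGraph.sup_adj, SimpleGraph.edge_adj]
      grind
    have hG' : H' ≤ G := by
      intro x y h
      rw [hadj] at h
      rcases h.1 with h | ⟨rfl, rfl⟩ | ⟨rfl, rfl⟩
      · exact hHG h
      · exact hG
      · exact hG.symm
    have hb' : ∀ w, dg H' w ≤ b := by
      intro w
      have := hdg w
      have := hb w
      by_cases hw : w = v0
      · subst hw; simp [h20.symm] at *; omega
      · simp [hw] at *; omega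
    by_cases hk : a < dg H v2
    · refine ⟨H', hG', hb', Finset.sum_lt_sum (fun w _ => ?_) ⟨v0, Finset.mem_univ _, ?_⟩⟩
      · have := hdg w
        by_cases hw : w = v2
        · subst hw; simp [h20] at this; omega
        · simp [hw] at this; omega
      · have := hdg v0
        simp [h20.symm] at this; omega
    have hk0 : 0 < k := by
      rcases Nat.eq_zero_or_pos k with rfl | h
      · exact absurd h2 hk
      · exact h
    have d0 := hdg v0
    have d1 := hdg v1
    have d2 := hdg v2
    simp [h20, h20.symm, h01, h01.symm, h12, h12.symm] at d0 d1 d2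
    have key : ∀ m ≤ k, ∀ w, (Gd G a b H m true w → ∃ m' ≤ m, Gd G a b H' m' true w) ∧
        (Gd G a b H m false w → ∃ m' ≤ m, Gd G a b H' m' false w) := by
      intro m
      induction m with
      | zero =>
        intro _ w
        have dw := hdg w
        refine ⟨fun h => ⟨0, le_rfl, ?_⟩, fun h => ⟨0, le_rfl, ?_⟩⟩
        · simp only [Gd] at h ⊢
          have : w ≠ v2 := by rintro rfl; exact hk h
          simp [this] at dw; omega
        · simp only [Gd] at h ⊢
          by_cases hw : w = v0
          · subst hw; omega
          · simp [hw] at dw; omega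
      | succ m ihm =>
        intro hm w
        refine ⟨fun h => ?_, fun h => ?_⟩
        · by_cases hw1 : w = v1
          · refine ⟨0, by omega, ?_⟩
            simp only [Gd]; subst hw1; omega
          have hw0 : w ≠ v0 := by rintro rfl; exact hmin (m + 1) (by omega) h
          obtain ⟨x, hx1, hx2, hx3⟩ := h
          obtain ⟨m', hm', hg⟩ := (ihm (by omega) x).2 hx3
          exact ⟨m' + 1, by omega, x, hx1, by rw [hadj]; tauto, hg⟩
        · by_cases hw1 : w = v1
          · subst hw1
            exact absurd ⟨w, hG, hH, h⟩ (hmin (m + 2) (by omega))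
          by_cases hw2 : w = v2
          · refine ⟨0, by omega, ?_⟩
            simp only [Gd]; subst hw2; omega
          obtain ⟨x, hx1, hx3⟩ := h
          obtain ⟨m', hm', hg⟩ := (ihm (by omega) x).1 hx3
          exact ⟨m' + 1, by omega, x, by rw [hadj]; tauto, hg⟩
    obtain ⟨m', hm', hg⟩ := (key k le_rfl v2).1 h2
    obtain ⟨H'', q1, q2, q3⟩ := ih m' (by omega) H' hG' hb' v2 (by omega) hg
    refine ⟨H'', q1, q2, lt_of_lt_of_eq q3 ?_⟩
    have : ∑ w, ((a - dg H' w) + (if w = v0 then 1 else 0)) =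
        ∑ w, ((a - dg H w) + (if w = v2 then 1 else 0)) := by
      refine Finset.sum_congr rfl fun w _ => ?_
      have dw := hdg w
      by_cases hw : w = v0
      · subst hw; simp [h20.symm]; omega
      · by_cases hw2 : w = v2
        · subst hw2; simp [h20]; omega
        · simp [hw, hw2] at *; omega
    rw [Finset.sum_add_distrib, Finset.sum_add_distrib] at this
    simpa [df] using this

lemma double_count {V : Type*} [Fintype V] [DecidableEq V] (H : SimpleGraph V) (S T : Finset V) :
    ∑ t ∈ T, (nb H t ∩ S).card = ∑ s ∈ S, (nb H s ∩ T).card := by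
  classical
  have := Finset.sum_card_bipartiteAbove_eq_sum_card_bipartiteBelow (s := T) (t := S) H.Adj
  convert this using 3 with x hx x hx
  · ext y; simp [mem_nb, Finset.bipartiteAbove, and_comm]
  · ext y; simp [mem_nb, Finset.bipartiteBelow, and_comm, H.adj_comm]

lemma hasAB_iff {V : Type*} [Fintype V] [DecidableEq V] (G : SimpleGraph V) (a b : ℕ) :
    G.HasABFactor a b ↔ ∃ H ≤ G, ∀ v, a ≤ dg H v ∧ dg H v ≤ b := by
  unfold SimpleGraph.HasABFactor
  refine exists_congr fun H => and_congr Iff.rfl (forall_congr' fun v => ?_)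
  have : ∀ (i : Fintype (H.neighborSet v)), @SimpleGraph.degree V H v i = dg H v := by
    intro i
    unfold dg
    rw [← SimpleGraph.card_neighborFinset_eq_degree]
    congr 1; ext x; simp [mem_nb]
  simp only [this]

end ABF

/-- **Lemma (Heinrich et al.; one-set version of Tutte's `[a,b]`-factor theorem).**
For `b > a ≥ 1`, a graph `G` contains an `[a,b]`-factor iff for every `S ⊆ V(G)`,
`a|W| - ∑_{v ∈ W} d_{G-S}(v) ≤ b|S|`, where `W = {v ∈ V(G)\S : d_{G-S}(v) < a}`. -/
theorem abFactor_iff (a b : ℕ) (ha : 0 < a) (hab : a < b)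
    {V : Type*} [Fintype V] [DecidableEq V]
    (G : SimpleGraph V) [DecidableRel G.Adj] :
    G.HasABFactor a b ↔ ∀ S : Finset V,
      (a : ℤ) * (Finset.univ.filter
          (fun v => v ∉ S ∧ (G.neighborFinset v \ S).card < a)).card -
        ∑ v ∈ Finset.univ.filter
            (fun v => v ∉ S ∧ (G.neighborFinset v \ S).card < a),
          ((G.neighborFinset v \ S).card : ℤ) ≤ (b : ℤ) * S.card := by
  rw [ABF.hasAB_iff]
  constructor
  · rintro ⟨H, hHG, hH⟩ S
    set W := Finset.univ.filter (fun v => v ∉ S ∧ (G.neighborFinset v \ S).card < a) with hW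
    have h1 : ∑ v ∈ W, ((a : ℤ) - ((G.neighborFinset v \ S).card : ℤ)) ≤
        ∑ v ∈ W, ((ABF.nb H v ∩ S).card : ℤ) := by
      refine Finset.sum_le_sum fun v _ => ?_
      have e1 : (ABF.nb H v ∩ S).card + (ABF.nb H v \ S).card = ABF.dg H v :=
        Finset.card_inter_add_card_sdiff _ _
      have e2 : (ABF.nb H v \ S).card ≤ (G.neighborFinset v \ S).card := by
        refine Finset.card_le_card (Finset.sdiff_subset_sdiff ?_ le_rfl)
        intro x hx
        rw [ABF.mem_nb] at hx
        simpa using hHG hx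
      have := (hH v).1
      omega
    have h2 : ∑ s ∈ S, (ABF.nb H s ∩ W).card ≤ ∑ s ∈ S, b :=
      Finset.sum_le_sum fun s _ =>
        (Finset.card_le_card Finset.inter_subset_left).trans (hH s).2
    rw [← ABF.double_count] at h2
    have h3 : ∑ v ∈ W, ((ABF.nb H v ∩ S).card : ℤ) ≤ S.card * b := by
      simp only [Finset.sum_const, smul_eq_mul] at h2
      exact_mod_cast h2
    simp only [Finset.sum_sub_distrib, Finset.sum_const, nsmul_eq_mul] at h1
    linarith
  · intro hS
    classical
    have hne : ∃ n, ∃ H : SimpleGraph V, H ≤ G ∧ (∀ v, ABF.dg H v ≤ b) ∧ ABF.df a H = n :=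
      ⟨_, ⊥, bot_le, fun v => by simp [ABF.dg, ABF.nb], rfl⟩
    obtain ⟨H, hHG, hb, hdf⟩ := Nat.find_spec hne
    refine ⟨H, hHG, fun v => ⟨?_, hb v⟩⟩
    by_contra hv
    push Not at hv
    have hno : ∀ n, ¬ ABF.Gd G a b H n true v := by
      intro n hn
      obtain ⟨H', q1, q2, q3⟩ := ABF.improve G a b hab n H hHG hb v hv hn
      exact Nat.find_min hne (hdf ▸ q3) ⟨H', q1, q2, rfl⟩
    set T := Finset.univ.filter (fun v => ∀ n, ¬ ABF.Gd G a b H n true v) with hT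
    set S := Finset.univ.filter (fun v => ∀ n, ¬ ABF.Gd G a b H n false v) with hSd
    have hvT : v ∈ T := by simpa [hT] using hno
    have hTa : ∀ t ∈ T, ABF.dg H t ≤ a := by
      intro t ht
      simp only [hT, Finset.mem_filter] at ht
      have := ht.2 0
      simp only [ABF.Gd] at this; omega
    have hSb : ∀ s ∈ S, b ≤ ABF.dg H s := by
      intro t ht
      simp only [hSd, Finset.mem_filter] at ht
      have := ht.2 0
      simp only [ABF.Gd] at this; omega
    have hTS : ∀ t ∈ T, ∀ w, G.Adj t w → w ∉ S → H.Adj t w := by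
      intro t ht w hw hwS
      by_contra hc
      simp only [hT, Finset.mem_filter] at ht
      refine hwS (by simp only [hSd, Finset.mem_filter]; exact ⟨Finset.mem_univ _, fun n hn => ht.2 (n+1) ⟨w, hw, hc, hn⟩⟩)
    have hST : ∀ s ∈ S, ABF.nb H s ⊆ T := by
      intro s hs w hw
      rw [ABF.mem_nb] at hw
      simp only [hSd, Finset.mem_filter] at hs
      simp only [hT, Finset.mem_filter]
      exact ⟨Finset.mem_univ _, fun n hn => hs.2 (n+1) ⟨w, hw, hn⟩⟩
    have hdisj : ∀ t ∈ T, t ∉ S := fun t ht hs => by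
      have := hTa t ht; have := hSb t hs; omega
    have hW := hS S
    set W := Finset.univ.filter (fun v => v ∉ S ∧ (G.neighborFinset v \ S).card < a) with hWd
    have e0 : ∑ t ∈ T, ((ABF.nb H t ∩ S).card : ℤ) <
        ∑ t ∈ T, ((a : ℤ) - ((G.neighborFinset t \ S).card : ℤ)) := by
      have aux : ∀ t ∈ T, (G.neighborFinset t \ S).card + (ABF.nb H t ∩ S).card ≤ ABF.dg H t := by
        intro t ht
        have e1 : (ABF.nb H t ∩ S).card + (ABF.nb H t \ S).card = ABF.dg H t :=
          Finset.card_inter_add_card_sdiff _ _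
        have e2 : (G.neighborFinset t \ S).card ≤ (ABF.nb H t \ S).card := by
          refine Finset.card_le_card ?_
          intro x hx
          simp only [Finset.mem_sdiff, SimpleGraph.mem_neighborFinset, ABF.mem_nb] at hx ⊢
          exact ⟨hTS t ht x hx.1 hx.2, hx.2⟩
        omega
      refine Finset.sum_lt_sum (fun t ht => ?_) ⟨v, hvT, ?_⟩
      · have := aux t ht; have := hTa t ht; omega
      · have := aux v hvT; omega
    have e1 : (S.card : ℤ) * b ≤ ∑ t ∈ T, ((ABF.nb H t ∩ S).card : ℤ) := by
      have : ∑ s ∈ S, b ≤ ∑ s ∈ S, (ABF.nb H s ∩ T).card := by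
        refine Finset.sum_le_sum fun s hs => ?_
        rw [Finset.inter_eq_left.mpr (hST s hs)]
        exact hSb s hs
      rw [← ABF.double_count] at this
      simp only [Finset.sum_const, smul_eq_mul] at this
      exact_mod_cast this
    have e2 : ∑ t ∈ T, ((a : ℤ) - ((G.neighborFinset t \ S).card : ℤ)) ≤
        ∑ t ∈ W, ((a : ℤ) - ((G.neighborFinset t \ S).card : ℤ)) := by
      rw [← Finset.sum_filter_add_sum_filter_not T (fun t => (G.neighborFinset t \ S).card < a)]
      have p1 : ∑ t ∈ T with ¬ (G.neighborFinset t \ S).card < a,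
          ((a : ℤ) - ((G.neighborFinset t \ S).card : ℤ)) ≤ 0 := by
        refine Finset.sum_nonpos fun t ht => ?_
        have := (Finset.mem_filter.mp ht).2
        omega
      have p2 : ∑ t ∈ T with (G.neighborFinset t \ S).card < a,
          ((a : ℤ) - ((G.neighborFinset t \ S).card : ℤ)) ≤
          ∑ t ∈ W, ((a : ℤ) - ((G.neighborFinset t \ S).card : ℤ)) := by
        refine Finset.sum_le_sum_of_subset_of_nonneg ?_ ?_
        · intro t ht
          have := Finset.mem_filter.mp ht
          simp only [hWd, Finset.mem_filter]
          exact ⟨Finset.mem_univ _, hdisj t this.1, this.2⟩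
        · intro t ht _
          have := (Finset.mem_filter.mp ht).2.2
          omega
      linarith
    have e3 : ∑ t ∈ W, ((a : ℤ) - ((G.neighborFinset t \ S).card : ℤ)) =
        (a : ℤ) * W.card - ∑ t ∈ W, ((G.neighborFinset t \ S).card : ℤ) := by
      simp only [Finset.sum_sub_distrib, Finset.sum_const, nsmul_eq_mul]
      ring
    linarith
end
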